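/- arXiv:1101.5355 — 7 statements merged into one kernel-verified Lean document; each statement's English description precedes it below -/
import Mathlib

section
/- Let A = 10000, B = 7500, and α = ε²/B. Then the limiting acceptance probabilities satisfy a(p+ε) − a(p) ≥ 0.01. (This is the quantitative content of the theorem that a two-state quantum finite automaton can distinguish a coin of bias p from a coin of bias p+ε with constant advantage, for arbitrarily small ε.) -/
open MeasureTheory ProbabilityTheory

/-!
Since `sin² θ = (1 - Re e^{2iθ}) / 2`, independence turns `E[sin² θ_t]` into a power of
`φ = E[e^{2iX}]`, and summing the geometric series gives
`a = (1 - Re (α / w)) / 2` with `w = 1 - (1 - α) φ`. Write `m` and `s` for the first two moments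
of a step, so that `|φ - 1 - 2im| ≤ 2s`.

* Without drift, `1 - Re (α / w) = Re ((w - α) / w) ≤ |w - α| / |w|`, where
  `|w - α| = (1 - α) |1 - φ| ≤ 2s` and `|w| ≥ α`, so `a ≤ s / α`.
* With drift `m > s`, the inequality `2 |Re w| |Im w| ≤ |w|²` gives
  `Re (α / w) ≤ α / (2 |Im w|)`, where `|Im w| = (1 - α) |Im φ| ≥ 2 (1 - α) (m - s)`.

For the automaton `s ≤ (ε / A)²`, and the drift is `0` for the bias `p` and `ε² / A` for the bias
`p + ε`: it is of the same order `ε²` as `α`, while `s / α ≤ B / A²` is small.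
-/

section Complex

theorem norm_exp_ofReal_mul_I_sub_one_sub_le_of_nonneg {x : ℝ} (hx : 0 ≤ x) :
    ‖Complex.exp (x * Complex.I) - 1 - x * Complex.I‖ ≤ x ^ 2 / 2 := by
  have hderiv (y : ℝ) : HasDerivAt
      (fun y : ℝ ↦ Complex.exp (y * Complex.I) - 1 - y * Complex.I)
      (Complex.exp (y * Complex.I) * Complex.I - Complex.I) y := by
    have hlin : HasDerivAt (fun y : ℝ ↦ (y : ℂ) * Complex.I) Complex.I y := by
      simpa using (hasDerivAt_id y).ofReal_comp.mul_const Complex.I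
    exact (hlin.cexp.sub_const 1).sub hlin
  have hsq (y : ℝ) : HasDerivAt (fun y : ℝ ↦ y ^ 2 / 2) y y := by
    simpa using (hasDerivAt_pow 2 y).div_const 2
  refine image_norm_le_of_norm_deriv_right_le_deriv_boundary
    (fun y _ ↦ (hderiv y).continuousAt.continuousWithinAt)
    (fun y _ ↦ (hderiv y).hasDerivWithinAt) (by simp) hsq (fun y hy ↦ ?_)
    (Set.right_mem_Icc.2 hx)
  calc ‖Complex.exp (y * Complex.I) * Complex.I - Complex.I‖
      = ‖Complex.exp (Complex.I * y) - 1‖ := by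
        rw [← sub_one_mul, norm_mul, Complex.norm_I, mul_one, mul_comm]
    _ ≤ ‖y‖ := Real.norm_exp_I_mul_ofReal_sub_one_le
    _ = y := Real.norm_of_nonneg hy.1

theorem norm_exp_ofReal_mul_I_sub_one_sub_le (x : ℝ) :
    ‖Complex.exp (x * Complex.I) - 1 - x * Complex.I‖ ≤ x ^ 2 / 2 := by
  rcases le_total 0 x with hx | hx
  · exact norm_exp_ofReal_mul_I_sub_one_sub_le_of_nonneg hx
  · have hconj : Complex.exp (x * Complex.I) - 1 - x * Complex.I =
        starRingEnd ℂ (Complex.exp ((-x : ℝ) * Complex.I) - 1 - (-x : ℝ) * Complex.I) := by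
      simp [← Complex.exp_conj, sub_eq_add_neg]
    rw [hconj, RCLike.norm_conj, ← neg_sq x]
    exact norm_exp_ofReal_mul_I_sub_one_sub_le_of_nonneg (neg_nonneg.2 hx)

theorem re_inv_le_inv_two_mul_abs_im {w : ℂ} (hw : w.im ≠ 0) :
    w⁻¹.re ≤ (2 * |w.im|)⁻¹ := by
  have him : 0 < 2 * |w.im| := mul_pos two_pos (abs_pos.2 hw)
  have hnorm : 0 < Complex.normSq w := Complex.normSq_pos.2 fun h ↦ hw (by simp [h])
  rw [Complex.inv_re, inv_eq_one_div, div_le_div_iff₀ hnorm him, one_mul,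
    Complex.normSq_apply, ← abs_mul_abs_self w.im]
  linarith [sq_nonneg (w.re - |w.im|)]

theorem norm_one_sub_ofReal {α : ℝ} (hα : α ≤ 1) : ‖(1 - α : ℂ)‖ = 1 - α := by
  rw [← Complex.ofReal_one, ← Complex.ofReal_sub, Complex.norm_of_nonneg (sub_nonneg.2 hα)]

theorem hasSum_geometric_weight_mul_pow {α : ℝ} (hα₀ : 0 < α) (hα₁ : α ≤ 1) {z : ℂ}
    (hz : ‖z‖ ≤ 1) :
    HasSum (fun t : ℕ ↦ ((α * (1 - α) ^ t : ℝ) : ℂ) * z ^ t) (α / (1 - (1 - α) * z)) := by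
  have hnorm : ‖(1 - α : ℂ) * z‖ < 1 := by
    calc ‖(1 - α : ℂ) * z‖ = (1 - α) * ‖z‖ := by rw [norm_mul, norm_one_sub_ofReal hα₁]
      _ ≤ 1 - α := mul_le_of_le_one_right (sub_nonneg.2 hα₁) hz
      _ < 1 := sub_lt_self 1 hα₀
  simpa [mul_pow, mul_assoc, div_eq_mul_inv] using
    (hasSum_geometric_of_norm_lt_one hnorm).mul_left (α : ℂ)

end Complex

section CharFun

theorem norm_charFun_sub_one_sub_le {ν : Measure ℝ} [IsProbabilityMeasure ν]
    (hν : MemLp id 2 ν) (t : ℝ) :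
    ‖charFun ν t - 1 - t * (∫ x, x ∂ν : ℝ) * Complex.I‖ ≤ t ^ 2 / 2 * ∫ x, x ^ 2 ∂ν := by
  have hid : Integrable (fun x : ℝ ↦ x) ν := hν.integrable one_le_two
  have hsq : Integrable (fun x : ℝ ↦ x ^ 2) ν := hν.integrable_sq
  have hexp : Integrable (fun x : ℝ ↦ Complex.exp ((t * x : ℝ) * Complex.I)) ν :=
    .of_bound (by fun_prop) 1 (.of_forall fun x ↦ (Complex.norm_exp_ofReal_mul_I _).le)
  have hlin : Integrable (fun x : ℝ ↦ ((t * x : ℝ) : ℂ) * Complex.I) ν :=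
    (hid.const_mul t).ofReal.mul_const _
  have hremainder : charFun ν t - 1 - t * (∫ x, x ∂ν : ℝ) * Complex.I =
      ∫ x : ℝ, (Complex.exp ((t * x : ℝ) * Complex.I) - 1 - (t * x : ℝ) * Complex.I) ∂ν := by
    have hsub : Integrable (fun x : ℝ ↦ Complex.exp ((t * x : ℝ) * Complex.I) - 1) ν :=
      hexp.sub (integrable_const 1)
    rw [integral_sub hsub hlin, integral_sub hexp (integrable_const 1), integral_mul_const,
      integral_complex_ofReal, integral_const_mul, charFun_apply_real]
    simp
  calc ‖charFun ν t - 1 - t * (∫ x, x ∂ν : ℝ) * Complex.I‖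
      ≤ ∫ x : ℝ, (t * x) ^ 2 / 2 ∂ν := by
        rw [hremainder]
        exact norm_integral_le_of_norm_le (by simpa [mul_pow] using (hsq.const_mul _).div_const 2)
          (.of_forall fun x ↦ norm_exp_ofReal_mul_I_sub_one_sub_le (t * x))
    _ = t ^ 2 / 2 * ∫ x, x ^ 2 ∂ν := by
        rw [← integral_const_mul]
        exact integral_congr_ae (.of_forall fun x ↦ by ring)

variable {Ω : Type*} [MeasurableSpace Ω] {μ : Measure Ω}

theorem integral_sin_sq_eq_charFun [IsProbabilityMeasure μ] {θ : Ω → ℝ} (hθ : AEMeasurable θ μ) :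
    ∫ ω, Real.sin (θ ω) ^ 2 ∂μ = (1 - (charFun (μ.map θ) 2).re) / 2 := by
  have hexp : Integrable (fun ω ↦ Complex.exp ((2 * θ ω : ℝ) * Complex.I)) μ :=
    .of_bound (by fun_prop) 1 (.of_forall fun ω ↦ (Complex.norm_exp_ofReal_mul_I _).le)
  have hcharFun : charFun (μ.map θ) 2 = ∫ ω, Complex.exp ((2 * θ ω : ℝ) * Complex.I) ∂μ := by
    rw [charFun_apply_real, integral_map hθ (by fun_prop)]
    simp
  have hre : (charFun (μ.map θ) 2).re = ∫ ω, Real.cos (2 * θ ω) ∂μ := by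
    rw [hcharFun, ← RCLike.re_eq_complex_re, ← integral_re hexp]
    simp only [RCLike.re_eq_complex_re, Complex.exp_ofReal_mul_I_re]
  have hcos : Integrable (fun ω ↦ Real.cos (2 * θ ω)) μ := by
    simpa only [RCLike.re_eq_complex_re, Complex.exp_ofReal_mul_I_re] using hexp.re
  calc ∫ ω, Real.sin (θ ω) ^ 2 ∂μ = ∫ ω, (1 - Real.cos (2 * θ ω)) / 2 ∂μ := by
        simp only [Real.sin_sq_eq_half_sub, sub_div]
    _ = (1 - (charFun (μ.map θ) 2).re) / 2 := by
        rw [integral_div, integral_sub (integrable_const 1) hcos, hre]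
        simp

theorem charFun_map_sum_eq_pow_card {ι E : Type*} [NormedAddCommGroup E] [InnerProductSpace ℝ E]
    [MeasurableSpace E] [BorelSpace E] [SecondCountableTopology E] {X : ι → Ω → E} {ν : Measure E}
    (hX : ∀ i, HasLaw (X i) ν μ) (hindep : iIndepFun X μ) (s : Finset ι) :
    charFun (μ.map fun ω ↦ ∑ i ∈ s, X i ω) = charFun ν ^ s.card := by
  rw [(hindep.restrict s).charFun_map_fun_finsetSum_eq_prod
    fun i _ ↦ (hX i).aemeasurable]
  simp [(hX _).map_eq]

end CharFun

section AcceptanceProb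

variable {Ω : Type*} [MeasurableSpace Ω]

/-- The limiting acceptance probability `a = Σ_t α (1 - α)^t E[sin² θ_t]` of the automaton that
rotates its qubit by the angle `X i` at step `i` and measures with probability `α` after each
step. With the indices starting at `0`, `θ_t = X 0 + ⋯ + X (t - 1)`. -/
noncomputable def acceptanceProb (μ : Measure Ω) (α : ℝ) (X : ℕ → Ω → ℝ) : ℝ :=
  ∑' t : ℕ, α * (1 - α) ^ t * ∫ ω, Real.sin (∑ i ∈ Finset.range t, X i ω) ^ 2 ∂μ

variable {μ : Measure Ω} {α : ℝ} {X : ℕ → Ω → ℝ} {ν : Measure ℝ} [IsProbabilityMeasure ν]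

theorem acceptanceProb_eq_charFun (hα₀ : 0 < α) (hα₁ : α ≤ 1) (hX : ∀ i, HasLaw (X i) ν μ)
    (hindep : iIndepFun X μ) :
    acceptanceProb μ α X = (1 - (α / (1 - (1 - α) * charFun ν 2) : ℂ).re) / 2 := by
  have : IsProbabilityMeasure μ := (hX 0).isProbabilityMeasure
  have hterm (t : ℕ) : ∫ ω, Real.sin (∑ i ∈ Finset.range t, X i ω) ^ 2 ∂μ =
      (1 - (charFun ν 2 ^ t).re) / 2 := by
    rw [integral_sin_sq_eq_charFun
      (Finset.aemeasurable_fun_sum _ fun i _ ↦ (hX i).aemeasurable),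
      charFun_map_sum_eq_pow_card hX hindep, Finset.card_range, Pi.pow_apply]
  have hone : HasSum (fun t : ℕ ↦ α * (1 - α) ^ t) 1 := by
    have hgeom := Complex.hasSum_re (hasSum_geometric_weight_mul_pow hα₀ hα₁ (z := 1) (by simp))
    simp only [one_pow, mul_one, Complex.ofReal_re, sub_sub_cancel] at hgeom
    rwa [div_self (Complex.ofReal_ne_zero.2 hα₀.ne'), Complex.one_re] at hgeom
  have hpow := Complex.hasSum_re
    (hasSum_geometric_weight_mul_pow hα₀ hα₁ (norm_charFun_le_one (μ := ν) 2))
  simp only [Complex.re_ofReal_mul] at hpow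
  simp only [acceptanceProb, hterm]
  refine (((hone.sub hpow).div_const 2).congr_fun fun t ↦ ?_).tsum_eq
  ring

theorem acceptanceProb_le_norm_one_sub_charFun (hα₀ : 0 < α) (hα₁ : α ≤ 1)
    (hX : ∀ i, HasLaw (X i) ν μ) (hindep : iIndepFun X μ) :
    acceptanceProb μ α X ≤ (1 - α) * ‖1 - charFun ν 2‖ / (2 * α) := by
  set w : ℂ := 1 - (1 - α) * charFun ν 2 with hw
  have hw_norm : α ≤ ‖w‖ := by
    have hφ : ‖(1 - α : ℂ) * charFun ν 2‖ ≤ 1 - α := by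
      rw [norm_mul, norm_one_sub_ofReal hα₁]
      exact mul_le_of_le_one_right (sub_nonneg.2 hα₁) (norm_charFun_le_one 2)
    have htriangle := norm_sub_norm_le (1 : ℂ) ((1 - α) * charFun ν 2)
    rw [norm_one] at htriangle
    linarith
  have hw_ne : w ≠ 0 := norm_pos_iff.1 (hα₀.trans_le hw_norm)
  have hquot : 1 - α / w = (1 - α) * (1 - charFun ν 2) / w := by
    rw [one_sub_div hw_ne, hw]
    ring
  have hre : 1 - (α / w).re ≤ (1 - α) * ‖1 - charFun ν 2‖ / α := by
    calc 1 - (α / w).re = (1 - α / w).re := by simp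
      _ ≤ ‖1 - α / w‖ := Complex.re_le_norm _
      _ = (1 - α) * ‖1 - charFun ν 2‖ / ‖w‖ := by
          rw [hquot, norm_div, norm_mul, norm_one_sub_ofReal hα₁]
      _ ≤ (1 - α) * ‖1 - charFun ν 2‖ / α := by
          have := sub_nonneg.2 hα₁
          gcongr
  rw [acceptanceProb_eq_charFun hα₀ hα₁ hX hindep, mul_comm 2 α, ← div_div]
  gcongr

theorem le_acceptanceProb_of_im_charFun_ne_zero (hα₀ : 0 < α) (hα₁ : α < 1)
    (hX : ∀ i, HasLaw (X i) ν μ) (hindep : iIndepFun X μ) (him : (charFun ν 2).im ≠ 0) :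
    (1 - α / (2 * ((1 - α) * |(charFun ν 2).im|))) / 2 ≤ acceptanceProb μ α X := by
  set w : ℂ := 1 - (1 - α) * charFun ν 2 with hw
  have hw_im : w.im = -((1 - α) * (charFun ν 2).im) := by
    simp [hw]
  have hw_im_ne : w.im ≠ 0 := by
    rw [hw_im]
    exact neg_ne_zero.2 (mul_ne_zero (sub_pos.2 hα₁).ne' him)
  have hre : (α / w).re ≤ α / (2 * ((1 - α) * |(charFun ν 2).im|)) := by
    calc (α / w).re = α * w⁻¹.re := by rw [div_eq_mul_inv, Complex.re_ofReal_mul]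
      _ ≤ α * (2 * |w.im|)⁻¹ := by
          gcongr
          exact re_inv_le_inv_two_mul_abs_im hw_im_ne
      _ = α / (2 * ((1 - α) * |(charFun ν 2).im|)) := by
          rw [hw_im, abs_neg, abs_mul, abs_of_pos (sub_pos.2 hα₁), div_eq_mul_inv]
  rw [acceptanceProb_eq_charFun hα₀ hα₁.le hX hindep]
  gcongr

theorem acceptanceProb_le_of_integral_eq_zero (hα₀ : 0 < α) (hα₁ : α ≤ 1)
    (hX : ∀ i, HasLaw (X i) ν μ) (hindep : iIndepFun X μ) (hν : MemLp id 2 ν)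
    (hmean : ∫ x, x ∂ν = 0) :
    acceptanceProb μ α X ≤ (∫ x, x ^ 2 ∂ν) / α := by
  have hφ : ‖1 - charFun ν 2‖ ≤ 2 * ∫ x, x ^ 2 ∂ν := by
    have htaylor := norm_charFun_sub_one_sub_le hν 2
    rw [hmean, Complex.ofReal_zero, mul_zero, zero_mul, sub_zero, norm_sub_rev] at htaylor
    linarith
  calc acceptanceProb μ α X ≤ (1 - α) * ‖1 - charFun ν 2‖ / (2 * α) :=
        acceptanceProb_le_norm_one_sub_charFun hα₀ hα₁ hX hindep
    _ ≤ 1 * (2 * ∫ x, x ^ 2 ∂ν) / (2 * α) := by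
        gcongr
        linarith
    _ = (∫ x, x ^ 2 ∂ν) / α := by
        rw [one_mul, mul_div_mul_left _ _ two_ne_zero]

theorem le_acceptanceProb_of_integral_sq_lt_integral (hα₀ : 0 < α) (hα₁ : α < 1)
    (hX : ∀ i, HasLaw (X i) ν μ) (hindep : iIndepFun X μ) (hν : MemLp id 2 ν)
    (hdrift : ∫ x, x ^ 2 ∂ν < ∫ x, x ∂ν) :
    1 / 2 - α / (8 * (1 - α) * (∫ x, x ∂ν - ∫ x, x ^ 2 ∂ν)) ≤ acceptanceProb μ α X := by
  set m := ∫ x, x ∂ν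
  set s := ∫ x, x ^ 2 ∂ν
  have hφ_im : 2 * (m - s) ≤ (charFun ν 2).im := by
    have him : (charFun ν 2 - 1 - (2 : ℝ) * (m : ℂ) * Complex.I).im = (charFun ν 2).im - 2 * m := by
      simp
    have htaylor := (Complex.abs_im_le_norm _).trans (norm_charFun_sub_one_sub_le hν 2)
    rw [him] at htaylor
    linarith [neg_le_of_abs_le htaylor]
  have hgap : 0 < m - s := sub_pos.2 hdrift
  have hφ_im_pos : 0 < (charFun ν 2).im := by linarith
  have hα : 0 < 1 - α := sub_pos.2 hα₁
  calc 1 / 2 - α / (8 * (1 - α) * (m - s))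
      = (1 - α / (2 * ((1 - α) * (2 * (m - s))))) / 2 := by
        field_simp
        ring
    _ ≤ (1 - α / (2 * ((1 - α) * |(charFun ν 2).im|))) / 2 := by
        rw [abs_of_pos hφ_im_pos]
        gcongr
    _ ≤ acceptanceProb μ α X :=
        le_acceptanceProb_of_im_charFun_ne_zero hα₀ hα₁ hX hindep hφ_im_pos.ne'

end AcceptanceProb

section CenteredCoin

/-- The law of `h * (c - p)`, where `c ∈ {0, 1}` is the toss of a coin of bias `q`: one rotation
step of the automaton tuned to the bias `p` and run on a coin of bias `q`, with `h = ε / A`. -/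
noncomputable abbrev centeredCoinMeasure (h p : ℝ) (q : unitInterval) : Measure ℝ :=
  bernoulliMeasure (h * (1 - p)) (-(h * p)) q

theorem memLp_id_two_centeredCoinMeasure (h p : ℝ) (q : unitInterval) :
    MemLp id 2 (centeredCoinMeasure h p q) :=
  (memLp_two_iff_integrable_sq (by fun_prop)).2 (integrable_bernoulliMeasure _ _ _ _)

theorem integral_id_centeredCoinMeasure (h p : ℝ) (q : unitInterval) :
    ∫ x, x ∂centeredCoinMeasure h p q = h * (q - p) := by
  rw [integral_bernoulliMeasure]
  simp only [smul_eq_mul]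
  ring

theorem integral_sq_centeredCoinMeasure_le (h : ℝ) (p q : unitInterval) :
    ∫ x, x ^ 2 ∂centeredCoinMeasure h p q ≤ h ^ 2 := by
  obtain ⟨hp₀, hp₁⟩ := p.2
  obtain ⟨hq₀, hq₁⟩ := q.2
  have hheads : (1 - p : ℝ) ^ 2 ≤ 1 := pow_le_one₀ (sub_nonneg.2 hp₁) (sub_le_self 1 hp₀)
  have htails : (p : ℝ) ^ 2 ≤ 1 := pow_le_one₀ hp₀ hp₁
  rw [integral_bernoulliMeasure]
  calc (q : ℝ) • (h * (1 - p)) ^ 2 + (1 - q : ℝ) • (-(h * p)) ^ 2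
      = h ^ 2 * (q * (1 - p) ^ 2 + (1 - q) * p ^ 2) := by
        simp only [smul_eq_mul]
        ring
    _ ≤ h ^ 2 * (q * 1 + (1 - q) * 1) := by
        have := sub_nonneg.2 hq₁
        gcongr
    _ = h ^ 2 := by ring

theorem centeredCoinMeasure_div_eq (ε A p : ℝ) (q : unitInterval) :
    centeredCoinMeasure (ε / A) p q =
      ENNReal.ofReal q • Measure.dirac (ε * (1 - p) / A) +
      ENNReal.ofReal (1 - q) • Measure.dirac (-(ε * p) / A) := by
  rw [centeredCoinMeasure, bernoulliMeasure_def, div_mul_eq_mul_div, div_mul_eq_mul_div, neg_div]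
  rw [ENNReal.ofReal_eq_coe_nnreal q.2.1, ENNReal.ofReal_eq_coe_nnreal (sub_nonneg.2 q.2.2)]
  rfl

variable {Ω : Type*} [MeasurableSpace Ω] {μ : Measure Ω} {α : ℝ} {X : ℕ → Ω → ℝ}

theorem acceptanceProb_centeredCoinMeasure_self_le (hα₀ : 0 < α) (hα₁ : α ≤ 1) {h : ℝ}
    {p : unitInterval} (hX : ∀ i, HasLaw (X i) (centeredCoinMeasure h p p) μ)
    (hindep : iIndepFun X μ) :
    acceptanceProb μ α X ≤ h ^ 2 / α := by
  have hmean : ∫ x, x ∂centeredCoinMeasure h p p = 0 := by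
    rw [integral_id_centeredCoinMeasure, sub_self, mul_zero]
  refine (acceptanceProb_le_of_integral_eq_zero hα₀ hα₁ hX hindep
    (memLp_id_two_centeredCoinMeasure h p p) hmean).trans ?_
  gcongr
  exact integral_sq_centeredCoinMeasure_le h p p

theorem le_acceptanceProb_centeredCoinMeasure (hα₀ : 0 < α) (hα₁ : α < 1) {h : ℝ}
    {p q : unitInterval} (hh₀ : 0 < h) (hh₁ : h < q - p)
    (hX : ∀ i, HasLaw (X i) (centeredCoinMeasure h p q) μ) (hindep : iIndepFun X μ) :
    1 / 2 - α / (8 * (1 - α) * (h * (q - p - h))) ≤ acceptanceProb μ α X := by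
  have hgap : h * (q - p - h) ≤
      ∫ x, x ∂centeredCoinMeasure h p q - ∫ x, x ^ 2 ∂centeredCoinMeasure h p q := by
    rw [integral_id_centeredCoinMeasure]
    linarith [integral_sq_centeredCoinMeasure_le h p q]
  have hgap_pos : 0 < h * (q - p - h) := mul_pos hh₀ (sub_pos.2 hh₁)
  have : 0 < 1 - α := sub_pos.2 hα₁
  refine le_trans ?_ (le_acceptanceProb_of_integral_sq_lt_integral hα₀ hα₁ hX hindep
    (memLp_id_two_centeredCoinMeasure h p q) (sub_pos.1 (hgap_pos.trans_le hgap)))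
  gcongr

end CenteredCoin

theorem two_state_qfa_distinguishes_general
    {Ω Ω' : Type*} [MeasurableSpace Ω] [MeasurableSpace Ω'] {μ : Measure Ω} {μ' : Measure Ω'}
    {p ε A B : ℝ} (hp : 0 ≤ p) (hε : 0 < ε) (hpε : p + ε ≤ 1) (hA : 1 < A) (hB : 1 < B)
    {X : ℕ → Ω → ℝ} {Y : ℕ → Ω' → ℝ} (hXindep : iIndepFun X μ) (hYindep : iIndepFun Y μ')
    (hX : ∀ i, HasLaw (X i) (ENNReal.ofReal p • Measure.dirac (ε * (1 - p) / A) +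
      ENNReal.ofReal (1 - p) • Measure.dirac (-(ε * p) / A)) μ)
    (hY : ∀ i, HasLaw (Y i) (ENNReal.ofReal (p + ε) • Measure.dirac (ε * (1 - p) / A) +
      ENNReal.ofReal (1 - (p + ε)) • Measure.dirac (-(ε * p) / A)) μ') :
    1 / 2 - A ^ 2 / (8 * (A - 1) * (B - 1)) - B / A ^ 2 ≤
      acceptanceProb μ' (ε ^ 2 / B) Y - acceptanceProb μ (ε ^ 2 / B) X := by
  let p' : unitInterval := ⟨p, hp, by linarith⟩
  let q' : unitInterval := ⟨p + ε, by linarith, hpε⟩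
  have hε_sq : ε ^ 2 ≤ 1 := pow_le_one₀ hε.le (by linarith)
  have hα₀ : 0 < ε ^ 2 / B := by positivity
  have hα₁ : ε ^ 2 / B < 1 := (div_lt_one (by linarith)).2 (by linarith)
  have hstep : ε / A < q' - p' := by
    simpa [p', q'] using div_lt_self hε hA
  have hfair : acceptanceProb μ (ε ^ 2 / B) X ≤ (ε / A) ^ 2 / (ε ^ 2 / B) :=
    acceptanceProb_centeredCoinMeasure_self_le (p := p') hα₀ hα₁.le
      (fun i ↦ (centeredCoinMeasure_div_eq ε A p p').symm ▸ hX i) hXindep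
  have hbiased := le_acceptanceProb_centeredCoinMeasure (p := p') (q := q') hα₀ hα₁
    (by positivity) hstep (fun i ↦ (centeredCoinMeasure_div_eq ε A p q').symm ▸ hY i) hYindep
  have hfair_eq : (ε / A) ^ 2 / (ε ^ 2 / B) = B / A ^ 2 := by
    field_simp
  have hbiased_eq : ε ^ 2 / B / (8 * (1 - ε ^ 2 / B) * (ε / A * (q' - p' - ε / A))) =
      A ^ 2 / (8 * (A - 1) * (B - ε ^ 2)) := by
    have : B - ε ^ 2 ≠ 0 := by linarith
    have : A - 1 ≠ 0 := by linarith
    simp only [p', q', add_sub_cancel_left]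
    field_simp
  have hbound : A ^ 2 / (8 * (A - 1) * (B - ε ^ 2)) ≤ A ^ 2 / (8 * (A - 1) * (B - 1)) := by
    have : 0 < A - 1 := sub_pos.2 hA
    have : 0 < B - 1 := sub_pos.2 hB
    gcongr
  linarith

/-- Quantitative form of the theorem that a two-state quantum finite automaton
distinguishes a coin of bias `p` from one of bias `p + ε`: with `A = 10000`,
`B = 7500`, and measurement probability `α = ε²/B`, the limiting acceptance
probabilities `a(q) = Σ_t α(1-α)^t E[sin² θ_t]` satisfy
`a(p+ε) - a(p) ≥ 0.01`. Here `X` (resp. `Y`) gives the i.i.d. rotation-angle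
steps for the coin of bias `p` (resp. `p + ε`). -/
theorem two_state_qfa_distinguishes
    {Ω : Type*} [MeasurableSpace Ω] (μ : Measure Ω) [IsProbabilityMeasure μ]
    (p ε A B α : ℝ) (hp : p ∈ Set.Icc (0:ℝ) 1) (hε : 0 < ε) (hpε : p + ε ≤ 1)
    (hA : A = 10000) (hB : B = 7500) (hα : α = ε ^ 2 / B)
    (X Y : ℕ → Ω → ℝ)
    (hXmeas : ∀ i, Measurable (X i)) (hYmeas : ∀ i, Measurable (Y i))
    (hXindep : iIndepFun X μ)
    (hYindep : iIndepFun Y μ)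
    (hXdist : ∀ i, μ.map (X i) =
      ENNReal.ofReal p • Measure.dirac (ε * (1 - p) / A) +
      ENNReal.ofReal (1 - p) • Measure.dirac (-(ε * p) / A))
    (hYdist : ∀ i, μ.map (Y i) =
      ENNReal.ofReal (p + ε) • Measure.dirac (ε * (1 - p) / A) +
      ENNReal.ofReal (1 - (p + ε)) • Measure.dirac (-(ε * p) / A)) :
    (∑' t : ℕ, α * (1 - α) ^ t *
        ∫ ω, Real.sin (∑ i ∈ Finset.range t, Y i ω) ^ 2 ∂μ) -
    (∑' t : ℕ, α * (1 - α) ^ t *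
        ∫ ω, Real.sin (∑ i ∈ Finset.range t, X i ω) ^ 2 ∂μ) ≥ 0.01 := by
  subst hA hB hα
  exact le_trans (by norm_num) (two_state_qfa_distinguishes_general hp.1 hε hpε
    (by norm_num : (1 : ℝ) < 10000) (by norm_num : (1 : ℝ) < 7500) hXindep hYindep
    (fun i ↦ ⟨(hXmeas i).aemeasurable, hXdist i⟩) (fun i ↦ ⟨(hYmeas i).aemeasurable, hYdist i⟩))
end

section
/- Suppose the coin bias is q = p. Then for every α ∈ (0,1) and every positive integer u, the limiting acceptance probability satisfies Σ_{t=0}^∞ α(1−α)^t E[sin² θ_t] ≤ (1−α)^u + ε² u / A². -/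
open MeasureTheory ProbabilityTheory

/-!
The steps are centred and independent, so `E[θ_t ^ 2]` is the sum of `t` variances, each at most
`(ε / A) ^ 2`. Hence `E[sin² θ_t] ≤ min 1 (t (ε / A) ^ 2)`. Using the second bound at the times
`t < u` and the first at the times `t ≥ u`, which have total geometric weight `(1 - α) ^ u`, gives
the claim.
-/

section GeometricWeights

lemma tsum_mul_le_tsum_nat_add_add {w a : ℕ → ℝ} {b : ℝ} {u : ℕ} (hw_nonneg : ∀ t, 0 ≤ w t)
    (hw : HasSum w 1) (ha_nonneg : ∀ t, 0 ≤ a t) (ha_le_one : ∀ t, a t ≤ 1) (hb : 0 ≤ b)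
    (ha_le : ∀ t < u, a t ≤ b) :
    ∑' t, w t * a t ≤ ∑' t, w (t + u) + b := by
  have hwa_le (t : ℕ) : w t * a t ≤ w t := mul_le_of_le_one_right (hw_nonneg t) (ha_le_one t)
  have hwa : Summable fun t ↦ w t * a t :=
    .of_nonneg_of_le (fun t ↦ mul_nonneg (hw_nonneg t) (ha_nonneg t)) hwa_le hw.summable
  have head : ∑ t ∈ Finset.range u, w t * a t ≤ b :=
    calc ∑ t ∈ Finset.range u, w t * a t
      _ ≤ ∑ t ∈ Finset.range u, w t * b := Finset.sum_le_sum fun t ht ↦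
          mul_le_mul_of_nonneg_left (ha_le t (Finset.mem_range.1 ht)) (hw_nonneg t)
      _ = (∑ t ∈ Finset.range u, w t) * b := (Finset.sum_mul ..).symm
      _ ≤ b := mul_le_of_le_one_left hb (sum_le_hasSum _ (fun t _ ↦ hw_nonneg t) hw)
  have tail : ∑' t, w (t + u) * a (t + u) ≤ ∑' t, w (t + u) :=
    ((summable_nat_add_iff u).2 hwa).tsum_le_tsum (fun t ↦ hwa_le (t + u))
      ((summable_nat_add_iff u).2 hw.summable)
  rw [← hwa.sum_add_tsum_nat_add u, add_comm]
  exact add_le_add tail head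

variable {α : ℝ}

lemma hasSum_mul_one_sub_pow_nat_add (hα : α ∈ Set.Ioc 0 1) (u : ℕ) :
    HasSum (fun t ↦ α * (1 - α) ^ (t + u)) ((1 - α) ^ u) := by
  have hgeom : HasSum (fun t ↦ (1 - α) ^ t) α⁻¹ := by
    simpa using hasSum_geometric_of_lt_one (sub_nonneg.2 hα.2) (sub_lt_self 1 hα.1)
  have h := hgeom.mul_left (α * (1 - α) ^ u)
  rw [mul_right_comm, mul_inv_cancel₀ hα.1.ne', one_mul] at h
  simpa only [mul_assoc, ← pow_add, add_comm u] using h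

lemma tsum_mul_one_sub_pow_mul_le {a : ℕ → ℝ} {b : ℝ} {u : ℕ} (hα : α ∈ Set.Ioc 0 1)
    (ha_nonneg : ∀ t, 0 ≤ a t) (ha_le_one : ∀ t, a t ≤ 1) (hb : 0 ≤ b)
    (ha_le : ∀ t < u, a t ≤ b) :
    ∑' t, α * (1 - α) ^ t * a t ≤ (1 - α) ^ u + b := by
  rw [← (hasSum_mul_one_sub_pow_nat_add hα u).tsum_eq]
  exact tsum_mul_le_tsum_nat_add_add
    (fun t ↦ mul_nonneg hα.1.le (pow_nonneg (sub_nonneg.2 hα.2) t))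
    (by simpa using hasSum_mul_one_sub_pow_nat_add hα 0) ha_nonneg ha_le_one hb ha_le

end GeometricWeights

section SecondMoments

variable {Ω : Type*} [MeasurableSpace Ω] {μ : Measure Ω}

lemma integral_sin_sq_le_one [IsProbabilityMeasure μ] (Y : Ω → ℝ) :
    ∫ ω, Real.sin (Y ω) ^ 2 ∂μ ≤ 1 := by
  simpa using integral_mono_of_nonneg (μ := μ) (.of_forall fun ω ↦ sq_nonneg (Real.sin (Y ω)))
    (integrable_const 1) (.of_forall fun ω ↦ Real.sin_sq_le_one (Y ω))

lemma integral_sin_sq_le_integral_sq {Y : Ω → ℝ} (hY : MemLp Y 2 μ) :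
    ∫ ω, Real.sin (Y ω) ^ 2 ∂μ ≤ ∫ ω, Y ω ^ 2 ∂μ :=
  integral_mono_of_nonneg (.of_forall fun _ ↦ sq_nonneg _) hY.integrable_sq
    (.of_forall fun _ ↦ sq_le_sq.2 Real.abs_sin_le_abs)

variable [IsFiniteMeasure μ] {ι : Type*} {X : ι → Ω → ℝ} {s : Finset ι}

lemma variance_fun_sum_le_of_covariance_nonpos (hX : ∀ i ∈ s, MemLp (X i) 2 μ)
    (hcov : (s : Set ι).Pairwise fun i j ↦ cov[X i, X j; μ] ≤ 0) :
    Var[fun ω ↦ ∑ i ∈ s, X i ω; μ] ≤ ∑ i ∈ s, Var[X i; μ] := by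
  classical
  rw [variance_fun_sum' hX]
  refine Finset.sum_le_sum fun i hi ↦ ?_
  have hoff : ∑ j ∈ s.erase i, cov[X i, X j; μ] ≤ 0 := Finset.sum_nonpos fun j hj ↦
    hcov hi (Finset.mem_of_mem_erase hj) (Finset.ne_of_mem_erase hj).symm
  rw [← Finset.add_sum_erase s _ hi, covariance_self (hX i hi).aemeasurable]
  exact add_le_of_nonpos_right hoff

lemma integral_sq_sum_le_of_covariance_nonpos (hX : ∀ i ∈ s, MemLp (X i) 2 μ)
    (hmean : ∀ i ∈ s, μ[X i] = 0)
    (hcov : (s : Set ι).Pairwise fun i j ↦ cov[X i, X j; μ] ≤ 0) :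
    ∫ ω, (∑ i ∈ s, X i ω) ^ 2 ∂μ ≤ ∑ i ∈ s, Var[X i; μ] := by
  have hsum_mean : ∫ ω, ∑ i ∈ s, X i ω ∂μ = 0 := by
    rw [integral_finsetSum s fun i hi ↦ (hX i hi).integrable one_le_two]
    exact Finset.sum_eq_zero hmean
  rw [← variance_of_integral_eq_zero (memLp_finsetSum s hX).aemeasurable hsum_mean]
  exact variance_fun_sum_le_of_covariance_nonpos hX hcov

end SecondMoments

section Bernoulli

lemma ofReal_smul_dirac_add_eq_bernoulliMeasure {S : Type*} [MeasurableSpace S] (a b : S)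
    (p : unitInterval) :
    ENNReal.ofReal p • Measure.dirac a + ENNReal.ofReal (1 - p) • Measure.dirac b =
      Ber(a, b, p) := by
  simp [bernoulliMeasure_def, ENNReal.smul_def, ← ENNReal.ofReal_coe_nnreal]

variable {Ω : Type*} [MeasurableSpace Ω] {μ : Measure Ω} {Y : Ω → ℝ} {a b : ℝ} {p : unitInterval}

lemma memLp_two_of_hasLaw_bernoulliMeasure (hY : HasLaw Y Ber(a, b, p) μ) : MemLp Y 2 μ := by
  have hid : MemLp id 2 (μ.map Y) := by
    rw [hY.map_eq, memLp_two_iff_integrable_sq aestronglyMeasurable_id]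
    exact integrable_bernoulliMeasure a b p _
  exact hid.comp_of_map hY.aemeasurable

lemma integral_of_hasLaw_bernoulliMeasure (hY : HasLaw Y Ber(a, b, p) μ) :
    μ[Y] = p * a + (1 - p) * b := by
  rw [hY.integral_eq, integral_bernoulliMeasure, smul_eq_mul, smul_eq_mul]

lemma variance_of_hasLaw_bernoulliMeasure (hY : HasLaw Y Ber(a, b, p) μ) :
    Var[Y; μ] = p * (1 - p) * (a - b) ^ 2 := by
  rw [hY.variance_eq, variance_eq_integral aemeasurable_id]
  simp only [integral_bernoulliMeasure, id_eq, smul_eq_mul]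
  ring

lemma variance_le_sq_sub_of_hasLaw_bernoulliMeasure (hY : HasLaw Y Ber(a, b, p) μ) :
    Var[Y; μ] ≤ (a - b) ^ 2 := by
  rw [variance_of_hasLaw_bernoulliMeasure hY]
  have hp : (p : ℝ) * (1 - p) ≤ 1 :=
    mul_le_one₀ p.2.2 (unitInterval.one_minus_nonneg p) (unitInterval.one_minus_le_one p)
  exact mul_le_of_le_one_left (sq_nonneg _) hp

end Bernoulli

theorem acceptance_upper_bound_bias_p_general
    {Ω : Type*} [MeasurableSpace Ω] {μ : Measure Ω} [IsProbabilityMeasure μ] {X : ℕ → Ω → ℝ}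
    (hX : ∀ i, MemLp (X i) 2 μ) (hmean : ∀ i, μ[X i] = 0)
    (hcov : Pairwise fun i j ↦ cov[X i, X j; μ] ≤ 0) {v : ℝ} (hvar : ∀ i, Var[X i; μ] ≤ v)
    {α : ℝ} (hα : α ∈ Set.Ioc 0 1) (u : ℕ) :
    ∑' t : ℕ, α * (1 - α) ^ t * ∫ ω, Real.sin (∑ i ∈ Finset.range t, X i ω) ^ 2 ∂μ
      ≤ (1 - α) ^ u + v * u := by
  have hv : 0 ≤ v := (variance_nonneg (X 0) μ).trans (hvar 0)
  refine tsum_mul_one_sub_pow_mul_le hα (fun t ↦ integral_nonneg fun _ ↦ sq_nonneg _)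
    (fun t ↦ integral_sin_sq_le_one _) (mul_nonneg hv u.cast_nonneg) fun t ht ↦ ?_
  calc ∫ ω, Real.sin (∑ i ∈ Finset.range t, X i ω) ^ 2 ∂μ
    _ ≤ ∫ ω, (∑ i ∈ Finset.range t, X i ω) ^ 2 ∂μ :=
        integral_sin_sq_le_integral_sq (memLp_finsetSum _ fun i _ ↦ hX i)
    _ ≤ ∑ i ∈ Finset.range t, Var[X i; μ] :=
        integral_sq_sum_le_of_covariance_nonpos (fun i _ ↦ hX i) (fun i _ ↦ hmean i)
          (hcov.set_pairwise _)
    _ ≤ ∑ _i ∈ Finset.range t, v := Finset.sum_le_sum fun i _ ↦ hvar i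
    _ = v * t := by rw [Finset.sum_const, Finset.card_range, nsmul_eq_mul, mul_comm]
    _ ≤ v * u := by gcongr

/-- Upper bound on the limiting acceptance probability of the two-state quantum
automaton when the coin bias equals `p`: for every measurement probability
`α ∈ (0,1)` and every positive integer `u`,
`Σ_t α(1-α)^t E[sin² θ_t] ≤ (1-α)^u + ε² u / A²`. -/
theorem acceptance_upper_bound_bias_p
    {Ω : Type*} [MeasurableSpace Ω] (μ : Measure Ω) [IsProbabilityMeasure μ]
    (p ε A : ℝ) (hp : p ∈ Set.Icc (0:ℝ) 1) (hε : 0 < ε) (hpε : p + ε ≤ 1)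
    (hA : 0 < A)
    (X : ℕ → Ω → ℝ) (hmeas : ∀ i, Measurable (X i))
    (hindep : iIndepFun X μ)
    (hdist : ∀ i, μ.map (X i) =
      ENNReal.ofReal p • Measure.dirac (ε * (1 - p) / A) +
      ENNReal.ofReal (1 - p) • Measure.dirac (-(ε * p) / A))
    (α : ℝ) (hα : α ∈ Set.Ioo (0:ℝ) 1) (u : ℕ) (hu : 1 ≤ u) :
    (∑' t : ℕ, α * (1 - α) ^ t *
        ∫ ω, Real.sin (∑ i ∈ Finset.range t, X i ω) ^ 2 ∂μ)
      ≤ (1 - α) ^ u + ε ^ 2 * u / A ^ 2 := by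
  lift p to unitInterval using hp
  have hlaw (i : ℕ) : HasLaw (X i) Ber(ε * (1 - p) / A, -(ε * p) / A, p) μ :=
    ⟨(hmeas i).aemeasurable, (hdist i).trans (ofReal_smul_dirac_add_eq_bernoulliMeasure _ _ p)⟩
  have hX (i : ℕ) : MemLp (X i) 2 μ := memLp_two_of_hasLaw_bernoulliMeasure (hlaw i)
  have hmean (i : ℕ) : μ[X i] = 0 := by
    rw [integral_of_hasLaw_bernoulliMeasure (hlaw i)]
    ring
  have hvar (i : ℕ) : Var[X i; μ] ≤ ε ^ 2 / A ^ 2 :=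
    (variance_le_sq_sub_of_hasLaw_bernoulliMeasure (hlaw i)).trans_eq (by ring)
  have hcov : Pairwise fun i j ↦ cov[X i, X j; μ] ≤ 0 := fun i j hij ↦
    ((hindep.indepFun hij).covariance_eq_zero (hX i) (hX j)).le
  rw [mul_div_right_comm]
  exact acceptance_upper_bound_bias_p_general hX hmean hcov hvar (Set.Ioo_subset_Ioc_self hα) u
end

section
/- Suppose the coin bias is q = p + ε. Then for every positive integer t with t ≤ πA/(4ε²), one has Pr[|θ_t| > π/2] ≤ 4/(πA). -/
open MeasureTheory ProbabilityTheory Real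

/-!
A step has mean `(p + ε) · ε(1 - p)/A - (1 - p - ε) · εp/A = ε² / A`, and its two values differ
by `ε / A`, so its variance is at most `(ε / A)² / 4`. Up to time `t ≤ πA / (4ε²)` the drift
therefore totals at most `π / 4` and the variance at most `π / (16A)`. Leaving `[-π/2, π/2]`
requires a deviation of at least `π / 4` from the mean, which by Chebyshev's inequality has
probability at most `(π / (16A)) / (π / 4)² = 1 / (πA)`.
-/

section Bernoulli

variable {α : Type*} [MeasurableSpace α] (x y : α) (q : unitInterval)

theorem ofReal_smul_dirac_add_ofReal_smul_dirac_eq_bernoulliMeasure :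
    ENNReal.ofReal q • Measure.dirac x + ENNReal.ofReal (1 - q) • Measure.dirac y =
      Ber(x, y, q) := by
  rw [bernoulliMeasure_def, ENNReal.ofReal_eq_coe_nnreal q.2.1,
    ENNReal.ofReal_eq_coe_nnreal (unitInterval.one_minus_nonneg q)]
  rfl

variable [MeasurableSingletonClass α]

theorem memLp_bernoulliMeasure {E : Type*} [NormedAddCommGroup E] (f : α → E) (r : ENNReal) :
    MemLp f r Ber(x, y, q) := by
  refine .of_bound (integrable_bernoulliMeasure x y q f).aestronglyMeasurable
    (max ‖f x‖ ‖f y‖) ?_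
  rw [bernoulliMeasure_def, ae_add_measure_iff]
  exact ⟨Measure.ae_smul_measure (by simp [ae_dirac_eq]) _,
    Measure.ae_smul_measure (by simp [ae_dirac_eq]) _⟩

theorem variance_bernoulliMeasure (f : α → ℝ) :
    Var[f; Ber(x, y, q)] = q * (1 - q) * (f x - f y) ^ 2 := by
  rw [variance_eq_sub (memLp_bernoulliMeasure x y q f 2), integral_bernoulliMeasure,
    integral_bernoulliMeasure]
  simp only [Pi.pow_apply, smul_eq_mul]
  ring

theorem variance_bernoulliMeasure_le (f : α → ℝ) :
    Var[f; Ber(x, y, q)] ≤ (f x - f y) ^ 2 / 4 := by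
  have mul_one_sub_le : (q : ℝ) * (1 - q) ≤ 1 / 4 := by nlinarith [sq_nonneg ((q : ℝ) - 1 / 2)]
  calc Var[f; Ber(x, y, q)] = q * (1 - q) * (f x - f y) ^ 2 := variance_bernoulliMeasure x y q f
    _ ≤ 1 / 4 * (f x - f y) ^ 2 := by gcongr
    _ = (f x - f y) ^ 2 / 4 := by ring

end Bernoulli

section Sums

variable {Ω ι : Type*} [MeasurableSpace Ω] {μ : Measure Ω} {ν : Measure ℝ} {X : ι → Ω → ℝ}
  {s : Finset ι}

theorem memLp_of_hasLaw {r : ENNReal} {Y : Ω → ℝ} (hY : HasLaw Y ν μ) (hν : MemLp id r ν) :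
    MemLp Y r μ := by
  rw [← hY.map_eq] at hν
  exact hν.comp_of_map hY.aemeasurable

theorem integral_sum_of_hasLaw (hX : ∀ i ∈ s, HasLaw (X i) ν μ) (hν : Integrable id ν) :
    μ[∑ i ∈ s, X i] = s.card * ∫ x, x ∂ν := by
  have integrable_X : ∀ i ∈ s, Integrable (X i) μ := fun i hi =>
    memLp_one_iff_integrable.1 (memLp_of_hasLaw (hX i hi) (memLp_one_iff_integrable.2 hν))
  simp only [Finset.sum_apply]
  rw [integral_finsetSum s integrable_X, Finset.sum_congr rfl fun i hi => (hX i hi).integral_eq,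
    Finset.sum_const, nsmul_eq_mul]

theorem variance_sum_of_hasLaw (hX : ∀ i ∈ s, HasLaw (X i) ν μ) (hν : MemLp id 2 ν)
    (hindep : (s : Set ι).Pairwise fun i j => X i ⟂ᵢ[μ] X j) :
    Var[∑ i ∈ s, X i; μ] = s.card * Var[id; ν] := by
  rw [IndepFun.variance_sum (fun i hi => memLp_of_hasLaw (hX i hi) hν) hindep,
    Finset.sum_congr rfl fun i hi => (hX i hi).variance_eq, Finset.sum_const, nsmul_eq_mul]

theorem measure_le_abs_le_variance_div_sq [IsFiniteMeasure μ] {Y : Ω → ℝ} (hY : MemLp Y 2 μ)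
    {b c : ℝ} (hmean : |μ[Y]| ≤ b) (hbc : b < c) :
    μ {ω | c ≤ |Y ω|} ≤ ENNReal.ofReal (Var[Y; μ] / (c - b) ^ 2) := by
  refine (measure_mono fun ω (hω : c ≤ |Y ω|) => ?_).trans
    (meas_ge_le_variance_div_sq hY (sub_pos.2 hbc))
  calc c - b ≤ |Y ω| - |μ[Y]| := sub_le_sub hω hmean
    _ ≤ |Y ω - μ[Y]| := abs_sub_abs_le_abs_sub _ _

end Sums

section AngleStep

variable (p ε A : ℝ) (hpε : p + ε ∈ unitInterval)

/-- The law of one step of the angle walk: `ε(1 - p)/A` with probability `p + ε`, and `-εp/A`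
otherwise. Only the bias `p + ε` is required to lie in `[0, 1]`, so `ε` may have either sign. -/
noncomputable def angleStepLaw : Measure ℝ :=
  Ber(ε * (1 - p) / A, -(ε * p) / A, ⟨p + ε, hpε⟩)

theorem memLp_two_angleStepLaw : MemLp id 2 (angleStepLaw p ε A hpε) :=
  memLp_bernoulliMeasure _ _ _ id 2

theorem integrable_angleStepLaw : Integrable id (angleStepLaw p ε A hpε) :=
  integrable_bernoulliMeasure _ _ _ id

theorem integral_angleStepLaw : ∫ x, x ∂angleStepLaw p ε A hpε = ε ^ 2 / A := by
  rw [angleStepLaw, integral_bernoulliMeasure]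
  simp only [smul_eq_mul]
  ring

theorem variance_angleStepLaw_le : Var[id; angleStepLaw p ε A hpε] ≤ (ε / A) ^ 2 / 4 := by
  refine (variance_bernoulliMeasure_le _ _ _ id).trans_eq ?_
  simp only [id_eq]
  ring

end AngleStep

section AngleWalk

variable {Ω ι : Type*} [MeasurableSpace Ω] {μ : Measure Ω} {p ε A : ℝ}
  {hpε : p + ε ∈ unitInterval} {X : ι → Ω → ℝ} {s : Finset ι}

theorem hasLaw_angleStepLaw (hpε : p + ε ∈ unitInterval) {Y : Ω → ℝ} (hY : AEMeasurable Y μ)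
    (hdist : μ.map Y =
      ENNReal.ofReal (p + ε) • Measure.dirac (ε * (1 - p) / A) +
      ENNReal.ofReal (1 - (p + ε)) • Measure.dirac (-(ε * p) / A)) :
    HasLaw Y (angleStepLaw p ε A hpε) μ :=
  ⟨hY, hdist.trans
    (ofReal_smul_dirac_add_ofReal_smul_dirac_eq_bernoulliMeasure _ _ ⟨p + ε, hpε⟩)⟩

theorem abs_integral_angleWalk_le (hε : ε ≠ 0) (hA : 0 < A)
    (hX : ∀ i ∈ s, HasLaw (X i) (angleStepLaw p ε A hpε) μ)
    (hs : (s.card : ℝ) ≤ π * A / (4 * ε ^ 2)) :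
    |μ[∑ i ∈ s, X i]| ≤ π / 4 := by
  rw [integral_sum_of_hasLaw hX (integrable_angleStepLaw p ε A hpε), integral_angleStepLaw,
    abs_of_nonneg (by positivity)]
  calc s.card * (ε ^ 2 / A) ≤ π * A / (4 * ε ^ 2) * (ε ^ 2 / A) := by gcongr
    _ = π / 4 := by field_simp

theorem variance_angleWalk_le (hε : ε ≠ 0) (hA : 0 < A)
    (hX : ∀ i ∈ s, HasLaw (X i) (angleStepLaw p ε A hpε) μ)
    (hindep : (s : Set ι).Pairwise fun i j => X i ⟂ᵢ[μ] X j)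
    (hs : (s.card : ℝ) ≤ π * A / (4 * ε ^ 2)) :
    Var[∑ i ∈ s, X i; μ] ≤ π / (16 * A) := by
  rw [variance_sum_of_hasLaw hX (memLp_two_angleStepLaw p ε A hpε) hindep]
  calc s.card * Var[id; angleStepLaw p ε A hpε]
      ≤ π * A / (4 * ε ^ 2) * ((ε / A) ^ 2 / 4) := by
        gcongr
        · exact variance_nonneg id _
        · exact variance_angleStepLaw_le p ε A hpε
    _ = π / (16 * A) := by field_simp; norm_num

theorem angle_walk_tail_bound_bias_p_plus_eps_general [IsProbabilityMeasure μ]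
    (hε : ε ≠ 0) (hA : 0 < A)
    (hX : ∀ i ∈ s, HasLaw (X i) (angleStepLaw p ε A hpε) μ)
    (hindep : (s : Set ι).Pairwise fun i j => X i ⟂ᵢ[μ] X j)
    (hs : (s.card : ℝ) ≤ π * A / (4 * ε ^ 2)) :
    μ {ω | π / 2 ≤ |∑ i ∈ s, X i ω|} ≤ ENNReal.ofReal (1 / (π * A)) := by
  have memLp_walk : MemLp (∑ i ∈ s, X i) 2 μ := memLp_finsetSum' s fun i hi =>
    memLp_of_hasLaw (hX i hi) (memLp_two_angleStepLaw p ε A hpε)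
  have chebyshev := measure_le_abs_le_variance_div_sq memLp_walk
    (abs_integral_angleWalk_le hε hA hX hs) (show π / 4 < π / 2 by linarith [pi_pos])
  simp only [Finset.sum_apply] at chebyshev
  refine chebyshev.trans (ENNReal.ofReal_le_ofReal ?_)
  calc Var[∑ i ∈ s, X i; μ] / (π / 2 - π / 4) ^ 2
      ≤ π / (16 * A) / (π / 2 - π / 4) ^ 2 := by
        gcongr
        exact variance_angleWalk_le hε hA hX hindep hs
    _ = 1 / (π * A) := by
        rw [show π / 2 - π / 4 = π / 4 by ring]
        field_simp
        norm_num

end AngleWalk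

/-- Concentration of the angle walk when the coin bias is `q = p + ε`: for every
positive integer `t` with `t ≤ πA/(4ε²)`, the probability that `|θ_t| > π/2`
is at most `4/(πA)`. -/
theorem angle_walk_tail_bound_bias_p_plus_eps
    {Ω : Type*} [MeasurableSpace Ω] (μ : Measure Ω) [IsProbabilityMeasure μ]
    (p ε A : ℝ) (hp : p ∈ Set.Icc (0:ℝ) 1) (hε : 0 < ε) (hpε : p + ε ≤ 1)
    (hA : 0 < A)
    (X : ℕ → Ω → ℝ) (hmeas : ∀ i, Measurable (X i))
    (hindep : iIndepFun X μ)
    (hdist : ∀ i, μ.map (X i) =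
      ENNReal.ofReal (p + ε) • Measure.dirac (ε * (1 - p) / A) +
      ENNReal.ofReal (1 - (p + ε)) • Measure.dirac (-(ε * p) / A))
    (t : ℕ) (ht : 1 ≤ t) (htle : (t : ℝ) ≤ π * A / (4 * ε ^ 2)) :
    μ {ω | |∑ i ∈ Finset.range t, X i ω| > π / 2}
      ≤ ENNReal.ofReal (4 / (π * A)) := by
  calc μ {ω | |∑ i ∈ Finset.range t, X i ω| > π / 2}
      ≤ μ {ω | π / 2 ≤ |∑ i ∈ Finset.range t, X i ω|} :=
        measure_mono (Set.ofPred_subset_ofPred.2 fun _ => le_of_lt)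
    _ ≤ ENNReal.ofReal (1 / (π * A)) :=
        angle_walk_tail_bound_bias_p_plus_eps_general hε.ne' hA
          (fun i _ => hasLaw_angleStepLaw ⟨add_nonneg hp.1 hε.le, hpε⟩ (hmeas i).aemeasurable
            (hdist i))
          (fun _ _ _ _ hij => hindep.indepFun hij) (by rwa [Finset.card_range])
    _ ≤ ENNReal.ofReal (4 / (π * A)) := by gcongr; norm_num
end

section
/- (Leaky Subspace Lemma.) Let A be an n×n complex matrix, let x ∈ ℂⁿ, and let U ⊆ ℂⁿ be a compact set. Suppose that for every y ∈ U there exists a positive integer k such that x† Aᵏ y ≠ 0. Then there exists a real constant c > 0 such that for every y ∈ U, max_{1 ≤ k ≤ n} |x† Aᵏ y| ≥ c. -/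
open Matrix

/-!
By Cayley–Hamilton, `Aᵏ` for `k ≥ 1` is a linear combination of `A, …, Aⁿ`, so if
`x† Aᵏ y ≠ 0` for some `k ≥ 1`, then already for some `1 ≤ k ≤ n`. The functions
`y ↦ |x† Aᵏ y|`, `1 ≤ k ≤ n`, are therefore continuous without a common zero on `U`, and
compactness turns this pointwise positivity into a uniform lower bound.
-/

theorem exists_lt_natDegree_map_pow_ne_zero {R S M : Type*} [CommRing R] [Semiring S] [Algebra R S]
    [AddCommMonoid M] [Module R M] (φ : S →ₗ[R] M) {a : S} {p : Polynomial R} (hp : p.Monic)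
    (ha : p.aeval a = 0) {k : ℕ} (hk : φ (a ^ k) ≠ 0) :
    ∃ i < p.natDegree, φ (a ^ i) ≠ 0 := by
  contrapose! hk
  have adjoin_le_ker : (Algebra.adjoin R {a}).toSubmodule ≤ LinearMap.ker φ := by
    rw [← Submodule.span_range_natDegree_eq_adjoin hp ha, Submodule.span_le]
    simpa [Set.subset_def] using hk
  exact adjoin_le_ker (pow_mem (Algebra.self_mem_adjoin_singleton R a) k)

theorem exists_le_card_dotProduct_pow_mulVec_ne_zero {m R : Type*} [Fintype m] [DecidableEq m]
    [CommRing R] {A : Matrix m m R} {v y : m → R} {k : ℕ} (hk : 0 < k)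
    (hne : v ⬝ᵥ (A ^ k) *ᵥ y ≠ 0) :
    ∃ i, 1 ≤ i ∧ i ≤ Fintype.card m ∧ v ⬝ᵥ (A ^ i) *ᵥ y ≠ 0 := by
  obtain ⟨k, rfl⟩ := Nat.exists_eq_add_one_of_ne_zero hk.ne'
  have : Nontrivial R := nontrivial_of_ne _ _ hne
  -- The extra factor `A` shifts the exponents `0, …, card m - 1` to `1, …, card m`.
  let φ : Matrix m m R →ₗ[R] R :=
    { toFun B := v ⬝ᵥ (B * A) *ᵥ y
      map_add' B C := by rw [add_mul, add_mulVec, dotProduct_add]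
      map_smul' r B := by rw [smul_mul_assoc, smul_mulVec, dotProduct_smul, RingHom.id_apply] }
  have φ_pow (i : ℕ) : φ (A ^ i) = v ⬝ᵥ (A ^ (i + 1)) *ᵥ y := by rw [pow_succ]; rfl
  obtain ⟨i, hi, hφ⟩ := exists_lt_natDegree_map_pow_ne_zero φ A.charpoly_monic
    A.aeval_self_charpoly (k := k) (by rwa [φ_pow])
  rw [A.charpoly_natDegree_eq_dim] at hi
  exact ⟨i + 1, Nat.le_add_left 1 i, hi, by rwa [← φ_pow]⟩

theorem exists_gt_forall_mem_exists_lt_of_isCompact {X α ι : Type*} [TopologicalSpace X]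
    [LinearOrder α] [DenselyOrdered α] [NoMaxOrder α] {K : Set X} (hK : IsCompact K)
    {f : ι → X → α} (hf : ∀ i, LowerSemicontinuousOn (f i) K) {a : α}
    (h : ∀ y ∈ K, ∃ i, a < f i y) :
    ∃ c, a < c ∧ ∀ y ∈ K, ∃ i, c < f i y := by
  refine hK.induction_on (p := fun s => ∃ c, a < c ∧ ∀ y ∈ s, ∃ i, c < f i y) ?empty ?mono
    ?union ?nhds
  case empty =>
    obtain ⟨c, hc⟩ := exists_gt a
    exact ⟨c, hc, fun y hy => hy.elim⟩
  case mono =>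
    rintro s t hst ⟨c, hc, ht⟩
    exact ⟨c, hc, fun y hy => ht y (hst hy)⟩
  case union =>
    rintro s t ⟨c, hc, hs⟩ ⟨d, hd, ht⟩
    refine ⟨min c d, lt_min hc hd, ?_⟩
    rintro y (hy | hy)
    · exact (hs y hy).imp fun i => (min_le_left c d).trans_lt
    · exact (ht y hy).imp fun i => (min_le_right c d).trans_lt
  case nhds =>
    intro y hy
    obtain ⟨i, hi⟩ := h y hy
    obtain ⟨c, hac, hci⟩ := exists_between hi
    exact ⟨{z | c < f i z}, hf i y hy c hci, c, hac, fun z hz => ⟨i, hz⟩⟩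

theorem leaky_subspace_lemma_general {m R : Type*} [Fintype m] [DecidableEq m] [NormedCommRing R]
    (A : Matrix m m R) (v : m → R) {U : Set (m → R)} (hU : IsCompact U)
    (h : ∀ y ∈ U, ∃ k : ℕ, 0 < k ∧ v ⬝ᵥ (A ^ k) *ᵥ y ≠ 0) :
    ∃ c : ℝ, 0 < c ∧ ∀ y ∈ U, ∃ k : ℕ, 1 ≤ k ∧ k ≤ Fintype.card m ∧
      c ≤ ‖v ⬝ᵥ (A ^ k) *ᵥ y‖ := by
  let f (k : Set.Icc 1 (Fintype.card m)) (y : m → R) : ℝ := ‖v ⬝ᵥ (A ^ k.1) *ᵥ y‖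
  have f_continuous (k) : Continuous (f k) :=
    (continuous_const.dotProduct (continuous_const.matrix_mulVec continuous_id)).norm
  have exists_f_pos : ∀ y ∈ U, ∃ k, 0 < f k y := fun y hy => by
    obtain ⟨k, hk, hne⟩ := h y hy
    obtain ⟨i, one_le, le_card, hi⟩ := exists_le_card_dotProduct_pow_mulVec_ne_zero hk hne
    exact ⟨⟨i, one_le, le_card⟩, norm_pos_iff.2 hi⟩
  obtain ⟨c, hc, hcU⟩ := exists_gt_forall_mem_exists_lt_of_isCompact hU
    (fun k => (f_continuous k).lowerSemicontinuous.lowerSemicontinuousOn U) exists_f_pos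
  refine ⟨c, hc, fun y hy => ?_⟩
  obtain ⟨⟨k, one_le, le_card⟩, hk⟩ := hcU y hy
  exact ⟨k, one_le, le_card, hk.le⟩

/-- Leaky Subspace Lemma: if for every `y` in a compact set `U ⊆ ℂⁿ` there is a
positive power `k` with `x† Aᵏ y ≠ 0`, then there is a uniform constant `c > 0`
such that every `y ∈ U` has some `k ∈ {1, …, n}` with `|x† Aᵏ y| ≥ c`. -/
theorem leaky_subspace_lemma {n : ℕ} (A : Matrix (Fin n) (Fin n) ℂ)
    (x : Fin n → ℂ) (U : Set (Fin n → ℂ)) (hU : IsCompact U)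
    (h : ∀ y ∈ U, ∃ k : ℕ, 0 < k ∧ star x ⬝ᵥ (A ^ k).mulVec y ≠ 0) :
    ∃ c : ℝ, 0 < c ∧ ∀ y ∈ U, ∃ k : ℕ, 1 ≤ k ∧ k ≤ n ∧
      c ≤ ‖star x ⬝ᵥ (A ^ k).mulVec y‖ := by
  simpa only [Fintype.card_fin] using leaky_subspace_lemma_general A (star x) hU h
end

section
/- (Root separation bound.) There is an absolute constant C > 0 with the following property. Let P be a univariate polynomial with integer coefficients, of degree d ≥ 2, all of whose coefficients have absolute value at most 2^τ, where τ ≥ 1. If z and z′ are distinct complex roots of P, then |z − z′| ≥ 2^{−C(d·log d + τ·d)}. -/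
/-!
Let `P` have degree `d`, let `f` be an irreducible integer factor of `P` vanishing at `z`, of degree
`n`, and let `k` be the multiplicity of `f` in `P`.
The `k`-th Hasse derivative `G` of `P` has no root in common with `f`, so the resultant of `f` and
`G` is a nonzero integer:
`1 ≤ |lc f| ^ d * ∏ |G(α)|`, the product being over the roots `α` of `f`.
The factor at `z` is small when `P` has another root `w` close to `z`, since `G(z)` is the first
nonzero Taylor coefficient of `P` at `z`; the other factors are controlled by the Mahler measure of
`f`, which is at most that of `P`.
Since `k * n ≤ d`, the binomial coefficients of the Hasse derivative contribute only
`d.choose k ^ n ≤ d ^ d`, which keeps the loss at `d log d` rather than `d ^ 2` in the exponent.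
-/

open Polynomial

lemma map_hasseDeriv {R S : Type*} [Semiring R] [Semiring S] (φ : R →+* S) (p : R[X]) (k : ℕ) :
    (hasseDeriv k p).map φ = hasseDeriv k (p.map φ) := by
  ext n
  simp [hasseDeriv_coeff]

section Length

variable {R : Type*}

/-- The length of a polynomial, i.e. the sum of the norms of its coefficients (its `ℓ¹` norm). It
is the measure of size in terms of which the explicit separation bound is stated. -/
noncomputable def polyLength [SeminormedRing R] (p : R[X]) : ℝ :=
  p.sum fun _ a ↦ ‖a‖

section SeminormedRing

variable [SeminormedRing R]

lemma polyLength_nonneg (p : R[X]) : 0 ≤ polyLength p :=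
  Finset.sum_nonneg fun _ _ ↦ norm_nonneg _

lemma polyLength_eq_sum_range {p : R[X]} {n : ℕ} (hn : p.natDegree < n) :
    polyLength p = ∑ i ∈ Finset.range n, ‖p.coeff i‖ :=
  p.sum_over_range' (fun _ ↦ norm_zero) n hn

lemma norm_coeff_le_polyLength (p : R[X]) (i : ℕ) : ‖p.coeff i‖ ≤ polyLength p := by
  by_cases hi : i ∈ p.support
  · exact Finset.single_le_sum (f := fun i ↦ ‖p.coeff i‖) (fun _ _ ↦ norm_nonneg _) hi
  · simpa [notMem_support_iff.1 hi] using polyLength_nonneg p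

lemma polyLength_le_of_norm_coeff_le {p : R[X]} {B : ℝ} (hB : ∀ i, ‖p.coeff i‖ ≤ B) :
    polyLength p ≤ (p.natDegree + 1) * B := by
  rw [polyLength_eq_sum_range p.natDegree.lt_succ_self]
  simpa using Finset.sum_le_card_nsmul (Finset.range (p.natDegree + 1)) _ B fun i _ ↦ hB i

lemma polyLength_map {S : Type*} [SeminormedRing S] {φ : R →+* S} (hφ : Isometry φ) (p : R[X]) :
    polyLength (p.map φ) = polyLength p := by
  rw [polyLength_eq_sum_range (natDegree_map_le.trans_lt p.natDegree.lt_succ_self),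
    polyLength_eq_sum_range p.natDegree.lt_succ_self]
  simp [hφ.norm_map_of_map_zero (map_zero φ)]

lemma polyLength_hasseDeriv_le (p : R[X]) (k : ℕ) :
    polyLength (hasseDeriv k p) ≤ p.natDegree.choose k * polyLength p := by
  set d := p.natDegree
  have norm_coeff_le (i : ℕ) :
      ‖(hasseDeriv k p).coeff i‖ ≤ d.choose k * ‖p.coeff (i + k)‖ := by
    rw [hasseDeriv_coeff, ← nsmul_eq_mul]
    rcases le_or_gt (i + k) d with hik | hik
    · exact norm_nsmul_le.trans (by gcongr)
    · simp [coeff_eq_zero_of_natDegree_lt hik]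
  have hdeg : (hasseDeriv k p).natDegree < d + 1 := by
    have := natDegree_hasseDeriv_le p k
    omega
  calc polyLength (hasseDeriv k p)
      = ∑ i ∈ Finset.range (d + 1), ‖(hasseDeriv k p).coeff i‖ := polyLength_eq_sum_range hdeg
    _ ≤ ∑ i ∈ Finset.range (d + 1), d.choose k * ‖p.coeff (i + k)‖ :=
        Finset.sum_le_sum fun i _ ↦ norm_coeff_le i
    _ = d.choose k * ∑ i ∈ Finset.Ico k (d + 1 + k), ‖p.coeff i‖ := by
        rw [← Finset.mul_sum, Finset.range_eq_Ico,
          Finset.sum_Ico_add' (fun i ↦ ‖p.coeff i‖), zero_add]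
    _ ≤ d.choose k * ∑ i ∈ Finset.range (d + 1 + k), ‖p.coeff i‖ := by
        rw [Finset.range_eq_Ico]
        gcongr
        exact k.zero_le
    _ = d.choose k * polyLength p := by
        rw [← polyLength_eq_sum_range (show p.natDegree < d + 1 + k by omega)]

lemma norm_eval_le_polyLength_mul [NormOneClass R] {p : R[X]} {n : ℕ} (hn : p.natDegree ≤ n)
    (x : R) : ‖p.eval x‖ ≤ polyLength p * max 1 ‖x‖ ^ n := by
  have norm_pow_le_max {i : ℕ} (hi : i ∈ p.support) : ‖x ^ i‖ ≤ max 1 ‖x‖ ^ n :=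
    calc ‖x ^ i‖ ≤ ‖x‖ ^ i := norm_pow_le x i
      _ ≤ max 1 ‖x‖ ^ i := by gcongr; exact le_max_right ..
      _ ≤ max 1 ‖x‖ ^ n :=
        pow_le_pow_right₀ (le_max_left ..) ((le_natDegree_of_mem_supp i hi).trans hn)
  rw [eval_eq_sum, polyLength, Polynomial.sum, Polynomial.sum, Finset.sum_mul]
  refine norm_sum_le_of_le _ fun i hi ↦ (norm_mul_le _ _).trans ?_
  gcongr
  exact norm_pow_le_max hi

lemma norm_eval_hasseDeriv_le [NormOneClass R] (p : R[X]) (k : ℕ) (x : R) :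
    ‖(hasseDeriv k p).eval x‖ ≤
      p.natDegree.choose k * polyLength p * max 1 ‖x‖ ^ p.natDegree := by
  have hdeg := (natDegree_hasseDeriv_le p k).trans (Nat.sub_le _ _)
  refine (norm_eval_le_polyLength_mul hdeg x).trans ?_
  gcongr
  exact polyLength_hasseDeriv_le p k

end SeminormedRing

lemma polyLength_taylor_le [SeminormedCommRing R] [NormOneClass R] (p : R[X]) (x : R) :
    polyLength (taylor x p) ≤ 2 ^ p.natDegree * polyLength p * max 1 ‖x‖ ^ p.natDegree := by
  have sum_choose : ∑ k ∈ Finset.range (p.natDegree + 1), (p.natDegree.choose k : ℝ) =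
      2 ^ p.natDegree := mod_cast Nat.sum_range_choose p.natDegree
  rw [polyLength_eq_sum_range (Nat.lt_succ_of_le (natDegree_taylor p x).le), ← sum_choose,
    Finset.sum_mul, Finset.sum_mul]
  gcongr with k
  rw [taylor_coeff]
  exact norm_eval_hasseDeriv_le p k x

end Length

section NearbyRoots

variable {𝕜 : Type*} [NormedField 𝕜]

lemma norm_trailingCoeff_le_of_eval_eq_zero {q : 𝕜[X]} {δ : 𝕜} (hδ : δ ≠ 0)
    (hq : q.eval δ = 0) : ‖q.trailingCoeff‖ ≤ ‖δ‖ * polyLength q := by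
  rcases le_total 1 ‖δ‖ with one_le | le_one
  · exact (norm_coeff_le_polyLength q _).trans
      (le_mul_of_one_le_left (polyLength_nonneg q) one_le)
  rcases eq_or_ne q 0 with rfl | hq0
  · simp [polyLength]
  set t := q.natTrailingDegree
  have isolate : q.coeff t * δ ^ t = -∑ i ∈ q.support.erase t, q.coeff i * δ ^ i := by
    rw [eval_eq_sum, Polynomial.sum,
      ← Finset.add_sum_erase _ _ (natTrailingDegree_mem_support_of_nonzero hq0)] at hq
    exact eq_neg_of_add_eq_zero_left hq
  have lt_of_mem {i : ℕ} (hi : i ∈ q.support.erase t) : t < i :=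
    (natTrailingDegree_le_of_mem_supp i (Finset.mem_of_mem_erase hi)).lt_of_ne'
      (Finset.ne_of_mem_erase hi)
  refine le_of_mul_le_mul_right ?_ (pow_pos (norm_pos_iff.2 hδ) t)
  calc ‖q.coeff t‖ * ‖δ‖ ^ t
      = ‖∑ i ∈ q.support.erase t, q.coeff i * δ ^ i‖ := by
        rw [← norm_pow, ← norm_mul, isolate, norm_neg]
    _ ≤ ∑ i ∈ q.support.erase t, ‖q.coeff i‖ * ‖δ‖ ^ (t + 1) := by
        refine norm_sum_le_of_le _ fun i hi ↦ ?_
        rw [norm_mul, norm_pow]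
        gcongr ?_ * ?_
        exact pow_le_pow_of_le_one (norm_nonneg δ) le_one (lt_of_mem hi)
    _ ≤ ∑ i ∈ q.support, ‖q.coeff i‖ * ‖δ‖ ^ (t + 1) :=
        Finset.sum_le_sum_of_subset_of_nonneg (Finset.erase_subset _ _) fun _ _ _ ↦ by positivity
    _ = ‖δ‖ * polyLength q * ‖δ‖ ^ t := by
        rw [← Finset.sum_mul, polyLength, Polynomial.sum]
        ring

lemma eval_hasseDeriv_rootMultiplicity {R : Type*} [CommRing R] (p : R[X]) (z : R) :
    (hasseDeriv (p.rootMultiplicity z) p).eval z = (taylor z p).trailingCoeff := by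
  rw [← taylor_coeff, rootMultiplicity_eq_natTrailingDegree, ← taylor_apply, trailingCoeff]

lemma norm_eval_hasseDeriv_rootMultiplicity_le {p : 𝕜[X]} {z w : 𝕜} (hzw : z ≠ w)
    (hw : p.eval w = 0) :
    ‖(hasseDeriv (p.rootMultiplicity z) p).eval z‖ ≤
      ‖z - w‖ * (2 ^ p.natDegree * polyLength p) * max 1 ‖z‖ ^ p.natDegree := by
  have hroot : (taylor z p).eval (w - z) = 0 := by rw [taylor_eval_sub, hw]
  rw [eval_hasseDeriv_rootMultiplicity, norm_sub_rev, mul_assoc]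
  refine (norm_trailingCoeff_le_of_eval_eq_zero (sub_ne_zero.2 hzw.symm) hroot).trans ?_
  gcongr
  exact polyLength_taylor_le p z

end NearbyRoots

section IrreducibleFactor

lemma multiplicity_mul_natDegree_le {R : Type*} [CommSemiring R] [NoZeroDivisors R] (f : R[X])
    {p : R[X]} (hp : p ≠ 0) : multiplicity f p * f.natDegree ≤ p.natDegree := by
  rw [← natDegree_pow]
  exact natDegree_le_of_dvd (pow_multiplicity_dvd f p) hp

lemma exists_prime_dvd_map_eq_zero {M N F : Type*} [CommMonoidWithZero M]
    [UniqueFactorizationMonoid M] [MonoidWithZero N] [NoZeroDivisors N] [Nontrivial N]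
    [FunLike F M N] [MonoidWithZeroHomClass F M N] (φ : F) {a : M} (ha : a ≠ 0) (hφ : φ a = 0) :
    ∃ p, Prime p ∧ p ∣ a ∧ φ p = 0 := by
  induction a using UniqueFactorizationMonoid.induction_on_prime with
  | h₁ => exact absurd rfl ha
  | h₂ u hu => exact absurd hφ (hu.map φ).ne_zero
  | h₃ b p hb hp ih =>
    rcases mul_eq_zero.1 ((map_mul φ p b).symm.trans hφ) with hφp | hφb
    · exact ⟨p, hp, dvd_mul_right p b, hφp⟩
    · obtain ⟨q, hq, hqb, hφq⟩ := ih hb hφb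
      exact ⟨q, hq, hqb.mul_left p, hφq⟩

variable {R L : Type*} [CommRing R] [Field L] [Algebra R L] [FaithfulSMul R L]
  {f : R[X]} {z : L}

lemma natDegree_pos_of_ne_zero_of_aeval_eq_zero (hf : f ≠ 0) (hz : aeval z f = 0) :
    0 < f.natDegree :=
  natDegree_pos_of_aeval_root hf hz fun _ h ↦
    (FaithfulSMul.algebraMap_eq_zero_iff R L).1 h

variable [IsDomain R]

lemma irreducible_dvd_iff_aeval_eq_zero [IsGCDMonoid R] (hf : Irreducible f)
    (hz : aeval z f = 0) {g : R[X]} : f ∣ g ↔ aeval z g = 0 := by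
  refine ⟨fun h ↦ aeval_eq_zero_of_dvd_aeval_eq_zero h hz, fun hg ↦ ?_⟩
  let K := FractionRing R
  let : Algebra K L := FractionRing.liftAlgebra R L
  have hprim : f.IsPrimitive :=
    hf.isPrimitive (natDegree_pos_of_ne_zero_of_aeval_eq_zero hf.ne_zero hz).ne'
  have hirr : Irreducible (f.map (algebraMap R K)) :=
    hprim.irreducible_iff_irreducible_map_fraction_map.1 hf
  have minpoly_dvd {h : R[X]} (hh : aeval z h = 0) : minpoly K z ∣ h.map (algebraMap R K) :=
    minpoly.dvd K z (by rwa [aeval_map_algebraMap])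
  have hassoc : Associated (minpoly K z) (f.map (algebraMap R K)) :=
    (hirr.dvd_iff.1 (minpoly_dvd hz)).resolve_left (minpoly.not_isUnit K z) |>.symm
  exact hprim.dvd_of_fraction_map_dvd_fraction_map (hassoc.dvd_iff_dvd_left.1 (minpoly_dvd hg))

variable [CharZero R]

lemma rootMultiplicity_map_of_irreducible [IsGCDMonoid R] (hf : Irreducible f)
    (hz : aeval z f = 0) : (f.map (algebraMap R L)).rootMultiplicity z = 1 := by
  have hdeg := natDegree_pos_of_ne_zero_of_aeval_eq_zero hf.ne_zero hz
  have hderiv : aeval z (derivative f) ≠ 0 := by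
    rw [Ne, ← irreducible_dvd_iff_aeval_eq_zero hf hz]
    exact not_dvd_of_natDegree_lt
      (fun h ↦ hdeg.ne' (derivative_eq_zero.1 h))
      (natDegree_derivative_lt hdeg.ne')
  have hmap : f.map (algebraMap R L) ≠ 0 :=
    (Polynomial.map_ne_zero_iff (FaithfulSMul.algebraMap_injective R L)).2 hf.ne_zero
  apply le_antisymm
  · rw [← not_lt, one_lt_rootMultiplicity_iff_isRoot hmap, derivative_map]
    simp [hderiv]
  · exact (rootMultiplicity_pos hmap).2 (by simpa using hz)

variable [UniqueFactorizationMonoid R]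

lemma rootMultiplicity_map_eq_multiplicity (hf : Irreducible f) (hz : aeval z f = 0) {p : R[X]}
    (hp : p ≠ 0) : (p.map (algebraMap R L)).rootMultiplicity z = multiplicity f p := by
  classical
  obtain ⟨s, hps, hfs⟩ :=
    (FiniteMultiplicity.of_not_isUnit hf.not_isUnit hp).exists_eq_pow_mul_and_not_dvd
  have hs : (s.map (algebraMap R L)).rootMultiplicity z = 0 :=
    rootMultiplicity_eq_zero (by simpa [irreducible_dvd_iff_aeval_eq_zero hf hz] using hfs)
  have hmap : p.map (algebraMap R L) ≠ 0 :=
    (Polynomial.map_ne_zero_iff (FaithfulSMul.algebraMap_injective R L)).2 hp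
  set k := multiplicity f p
  rw [hps, Polynomial.map_mul, Polynomial.map_pow] at hmap ⊢
  rw [rootMultiplicity_mul hmap, hs, ← count_roots, roots_pow, Multiset.count_nsmul, count_roots,
    rootMultiplicity_map_of_irreducible hf hz, mul_one, add_zero]

lemma aeval_hasseDeriv_multiplicity_ne_zero (hf : Irreducible f) {p : R[X]} (hp : p ≠ 0)
    (hz : aeval z f = 0) : aeval z (hasseDeriv (multiplicity f p) p) ≠ 0 := by
  rw [← eval_map_algebraMap, map_hasseDeriv, ← rootMultiplicity_map_eq_multiplicity hf hz hp,
    eval_hasseDeriv_rootMultiplicity, Ne, trailingCoeff_eq_zero, taylor_eq_zero]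
  exact (Polynomial.map_ne_zero_iff (FaithfulSMul.algebraMap_injective R L)).2 hp

end IrreducibleFactor

section IntegerPolynomials

lemma isometry_algebraMap_int_complex : Isometry (algebraMap ℤ ℂ) :=
  AddMonoidHomClass.isometry_of_norm _ Complex.norm_intCast

lemma one_le_norm_int_of_ne_zero {a : ℤ} (ha : a ≠ 0) : 1 ≤ ‖a‖ := by
  rw [Int.norm_eq_abs]
  exact_mod_cast Int.one_le_abs ha

lemma one_le_polyLength {P : ℤ[X]} (hP : P ≠ 0) : 1 ≤ polyLength P :=
  (one_le_norm_int_of_ne_zero (leadingCoeff_ne_zero.2 hP)).trans (norm_coeff_le_polyLength P _)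

lemma mapMahlerMeasure_le_of_dvd {f P : ℤ[X]} (hP : P ≠ 0) (hf : f ∣ P) :
    f.mapMahlerMeasure (algebraMap ℤ ℂ) ≤ P.mapMahlerMeasure (algebraMap ℤ ℂ) := by
  obtain ⟨g, rfl⟩ := hf
  rw [mapMahlerMeasure_mul]
  refine le_mul_of_one_le_right (mapMahlerMeasure_nonneg ..) ?_
  exact (one_le_norm_int_of_ne_zero (leadingCoeff_ne_zero.2 (right_ne_zero_of_mul hP))).trans
    (leadingCoeff_le_mapMahlerMeasure _ _ isometry_algebraMap_int_complex)

lemma one_le_norm_leadingCoeff_pow_mul_prod_eval_roots {f g : ℤ[X]} (hf : f ≠ 0) {m : ℕ}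
    (hg : g.natDegree ≤ m) (hfg : ∀ α : ℂ, aeval α f = 0 → aeval α g ≠ 0) :
    1 ≤ ‖(f.map (algebraMap ℤ ℂ)).leadingCoeff ^ m *
      ((f.map (algebraMap ℤ ℂ)).roots.map (g.map (algebraMap ℤ ℂ)).eval).prod‖ := by
  set F := f.map (algebraMap ℤ ℂ) with hF_def
  set G := g.map (algebraMap ℤ ℂ) with hG_def
  have hF : F ≠ 0 :=
    (Polynomial.map_ne_zero_iff (FaithfulSMul.algebraMap_injective ℤ ℂ)).2 hf
  have hres : F.leadingCoeff ^ m * (F.roots.map G.eval).prod =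
      algebraMap ℤ ℂ (resultant f g F.natDegree m) := by
    rw [← resultant_map_map]
    exact (resultant_eq_prod_eval F G m (natDegree_map_le.trans hg) (IsAlgClosed.splits F)).symm
  have hG {α : ℂ} (hα : α ∈ F.roots) : G.eval α ≠ 0 := by
    rw [hG_def, eval_map_algebraMap]
    rw [mem_roots hF, IsRoot, hF_def, eval_map_algebraMap] at hα
    exact hfg α hα
  have hne : resultant f g F.natDegree m ≠ 0 := by
    rw [Ne, ← FaithfulSMul.algebraMap_eq_zero_iff ℤ ℂ, ← hres]
    refine mul_ne_zero (pow_ne_zero _ (leadingCoeff_ne_zero.2 hF)) (Multiset.prod_ne_zero ?_)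
    simpa using fun α ↦ hG (α := α)
  rw [hres, isometry_algebraMap_int_complex.norm_map_of_map_zero (map_zero _)]
  exact one_le_norm_int_of_ne_zero hne

end IntegerPolynomials

lemma norm_leadingCoeff_pow_mul_prod_roots_le {f : ℂ[X]} {z : ℂ} (hz : z ∈ f.roots) {h : ℂ → ℂ}
    {A B : ℝ} {m : ℕ} (hA : ‖h z‖ ≤ A * max 1 ‖z‖ ^ m)
    (hB : ∀ α ∈ f.roots, ‖h α‖ ≤ B * max 1 ‖α‖ ^ m) :
    ‖f.leadingCoeff ^ m * (f.roots.map h).prod‖ ≤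
      A * B ^ (f.natDegree - 1) * f.mahlerMeasure ^ m := by
  obtain ⟨s, hs⟩ := Multiset.exists_cons_of_mem hz
  have hcard : f.natDegree - 1 = s.card := by
    rw [(IsAlgClosed.splits f).natDegree_eq_card_roots, hs, Multiset.card_cons,
      Nat.add_sub_cancel]
  have prod_le : ‖(s.map h).prod‖ ≤ B ^ s.card * (s.map fun α ↦ max 1 ‖α‖).prod ^ m :=
    calc ‖(s.map h).prod‖ = (s.map fun α ↦ ‖h α‖).prod := by
          simpa using map_multiset_prod (normHom (α := ℂ)) (s.map h)
      _ ≤ (s.map fun α ↦ B * max 1 ‖α‖ ^ m).prod :=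
          Multiset.prod_map_le_prod_map₀ _ _ (fun _ _ ↦ norm_nonneg _)
            fun α hα ↦ hB α (hs ▸ Multiset.mem_cons_of_mem hα)
      _ = _ := by
          rw [Multiset.prod_map_mul, Multiset.map_const', Multiset.prod_replicate,
            Multiset.prod_map_pow]
  rw [mahlerMeasure_eq_leadingCoeff_mul_prod_roots, hcard, hs, Multiset.map_cons,
    Multiset.map_cons, Multiset.prod_cons, Multiset.prod_cons, norm_mul, norm_mul, norm_pow]
  calc ‖f.leadingCoeff‖ ^ m * (‖h z‖ * ‖(s.map h).prod‖)
      ≤ ‖f.leadingCoeff‖ ^ m * ((A * max 1 ‖z‖ ^ m) *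
          (B ^ s.card * (s.map fun α ↦ max 1 ‖α‖).prod ^ m)) := by
        gcongr
        exact (norm_nonneg _).trans hA
    _ = _ := by ring

lemma choose_pow_le_pow {d k n : ℕ} (hd : 0 < d) (hkn : k * n ≤ d) : d.choose k ^ n ≤ d ^ d :=
  calc d.choose k ^ n ≤ (d ^ k) ^ n := Nat.pow_le_pow_left (d.choose_le_pow k) n
    _ = d ^ (k * n) := (pow_mul d k n).symm
    _ ≤ d ^ d := Nat.pow_le_pow_right hd hkn

section Separation

variable {P f : ℤ[X]} {z w : ℂ}

lemma one_le_norm_sub_mul_of_irreducible_dvd (hP : P ≠ 0) (hf : Irreducible f) (hfP : f ∣ P)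
    (hfz : aeval z f = 0) (hw : aeval w P = 0) (hzw : z ≠ w) :
    1 ≤ ‖z - w‖ * (2 ^ P.natDegree * polyLength P) *
      (P.natDegree.choose (multiplicity f P) * polyLength P) ^ (f.natDegree - 1) *
      polyLength P ^ P.natDegree := by
  let φ := algebraMap ℤ ℂ
  have hφ : Function.Injective φ := FaithfulSMul.algebraMap_injective ℤ ℂ
  have hzf : z ∈ (f.map φ).roots := by
    rw [mem_roots ((Polynomial.map_ne_zero_iff hφ).2 hf.ne_zero), IsRoot, eval_map_algebraMap, hfz]
  have hwP : (P.map φ).eval w = 0 := by rw [eval_map_algebraMap, hw]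
  have hM : (f.map φ).mahlerMeasure ≤ polyLength P :=
    (mapMahlerMeasure_le_of_dvd hP hfP).trans
      (mapMahlerMeasure_le_sum_norm_coeff _ _ isometry_algebraMap_int_complex)
  have lower := one_le_norm_leadingCoeff_pow_mul_prod_eval_roots hf.ne_zero
    ((natDegree_hasseDeriv_le P (multiplicity f P)).trans (Nat.sub_le _ _))
    fun _ hα ↦ aeval_hasseDeriv_multiplicity_ne_zero hf hP hα
  have small := norm_eval_hasseDeriv_rootMultiplicity_le hzw hwP
  have upper := norm_leadingCoeff_pow_mul_prod_roots_le hzf small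
    fun α _ ↦ norm_eval_hasseDeriv_le (P.map φ) _ α
  rw [rootMultiplicity_map_eq_multiplicity hf hfz hP, ← map_hasseDeriv,
    polyLength_map isometry_algebraMap_int_complex, natDegree_map_eq_of_injective hφ,
    natDegree_map_eq_of_injective hφ] at upper
  refine lower.trans (upper.trans ?_)
  have hL := polyLength_nonneg P
  have := mahlerMeasure_nonneg (f.map φ)
  gcongr

theorem one_le_mul_norm_sub_of_aeval_eq_zero (hP : P ≠ 0) (hz : aeval z P = 0)
    (hw : aeval w P = 0) (hzw : z ≠ w) :
    1 ≤ (2 * P.natDegree * polyLength P ^ 2) ^ P.natDegree * ‖z - w‖ := by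
  obtain ⟨f, hf, hfP, hfz⟩ := exists_prime_dvd_map_eq_zero (aeval z) hP hz
  set d := P.natDegree
  set L := polyLength P
  set n := f.natDegree
  set k := multiplicity f P
  have hn : 0 < n := natDegree_pos_of_ne_zero_of_aeval_eq_zero hf.ne_zero hfz
  have hnd : n ≤ d := natDegree_le_of_dvd hfP hP
  have hL : 1 ≤ L := one_le_polyLength hP
  have hchoose : (d.choose k : ℝ) ^ (n - 1) ≤ d ^ d := by
    have hkn : k * (n - 1) ≤ d :=
      (Nat.mul_le_mul_left k n.pred_le).trans (multiplicity_mul_natDegree_le f hP)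
    exact_mod_cast choose_pow_le_pow (hn.trans_le hnd) hkn
  calc (1 : ℝ) ≤ ‖z - w‖ * (2 ^ d * L) * (d.choose k * L) ^ (n - 1) * L ^ d :=
        one_le_norm_sub_mul_of_irreducible_dvd hP hf.irreducible hfP hfz hw hzw
    _ = 2 ^ d * d.choose k ^ (n - 1) * L ^ (n - 1 + 1) * L ^ d * ‖z - w‖ := by ring
    _ ≤ 2 ^ d * d ^ d * L ^ d * L ^ d * ‖z - w‖ := by
        gcongr
        omega
    _ = (2 * d * L ^ 2) ^ d * ‖z - w‖ := by ring

end Separation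

lemma le_two_rpow_two_mul_log {x : ℝ} (hx : 1 ≤ x) : x ≤ 2 ^ (2 * Real.log x) := by
  have hx0 : 0 < x := one_pos.trans_le hx
  rw [Real.le_rpow_iff_log_le hx0 two_pos]
  nlinarith [Real.log_nonneg hx, Real.log_two_gt_d9]

lemma two_mul_mul_sq_pow_le_two_rpow {d : ℕ} (hd : 2 ≤ d) {τ : ℝ} (hτ : 0 ≤ τ) :
    (2 * d * ((d + 1) * 2 ^ τ) ^ 2) ^ d ≤ (2 : ℝ) ^ (12 * (d * Real.log d + τ * d)) := by
  have hd' : (2 : ℝ) ≤ d := mod_cast hd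
  have base_le : 2 * d * ((d + 1) * 2 ^ τ) ^ 2 ≤ (2 : ℝ) ^ (12 * (Real.log d + τ)) :=
    calc 2 * d * ((d + 1) * (2 : ℝ) ^ τ) ^ 2 ≤ d * d * (d ^ 2 * 2 ^ τ) ^ 2 := by
          gcongr
          nlinarith
      _ = (d : ℝ) ^ 6 * (2 ^ τ) ^ 2 := by ring
      _ ≤ (2 ^ (2 * Real.log d)) ^ 6 * (2 ^ τ) ^ 2 := by
          gcongr
          exact le_two_rpow_two_mul_log (by linarith)
      _ = (2 : ℝ) ^ (12 * Real.log d + 2 * τ) := by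
          rw [← Real.rpow_mul_natCast two_pos.le, ← Real.rpow_mul_natCast two_pos.le,
            ← Real.rpow_add two_pos]
          push_cast
          ring_nf
      _ ≤ (2 : ℝ) ^ (12 * (Real.log d + τ)) := by
          gcongr
          · norm_num
          · linarith
  calc (2 * d * ((d + 1) * (2 : ℝ) ^ τ) ^ 2) ^ d
      ≤ ((2 : ℝ) ^ (12 * (Real.log d + τ))) ^ d := by gcongr
    _ = (2 : ℝ) ^ (12 * (d * Real.log d + τ * d)) := by
        rw [← Real.rpow_mul_natCast two_pos.le]
        ring_nf

/-- Root separation bound: there is an absolute constant `C > 0` such that any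
two distinct complex roots of a degree-`d ≥ 2` integer polynomial whose
coefficients are bounded in absolute value by `2^τ` (with `τ ≥ 1`) are at
distance at least `2^{-C(d log d + τ d)}`. -/
theorem root_separation_bound :
    ∃ C : ℝ, 0 < C ∧ ∀ (P : Polynomial ℤ) (d : ℕ) (τ : ℝ),
      P.natDegree = d → 2 ≤ d → 1 ≤ τ →
      (∀ i : ℕ, (|P.coeff i| : ℝ) ≤ (2 : ℝ) ^ τ) →
      ∀ z z' : ℂ, Polynomial.aeval z P = 0 → Polynomial.aeval z' P = 0 →
        z ≠ z' →
        (2 : ℝ) ^ (-(C * ((d : ℝ) * Real.log d + τ * d))) ≤ ‖z - z'‖ := by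
  refine ⟨12, by norm_num, ?_⟩
  rintro P d τ rfl hd hτ hcoeff z z' hz hz' hne
  have hP : P ≠ 0 := ne_zero_of_natDegree_gt hd
  have hL : polyLength P ≤ (P.natDegree + 1) * 2 ^ τ :=
    polyLength_le_of_norm_coeff_le fun i ↦ (Int.norm_eq_abs _).trans_le (hcoeff i)
  have hL0 := polyLength_nonneg P
  rw [Real.rpow_neg two_pos.le, inv_le_iff_one_le_mul₀' (by positivity)]
  calc (1 : ℝ) ≤ (2 * P.natDegree * polyLength P ^ 2) ^ P.natDegree * ‖z - z'‖ :=
        one_le_mul_norm_sub_of_aeval_eq_zero hP hz hz' hne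
    _ ≤ (2 * P.natDegree * ((P.natDegree + 1) * 2 ^ τ) ^ 2) ^ P.natDegree * ‖z - z'‖ := by
        gcongr
    _ ≤ 2 ^ (12 * (P.natDegree * Real.log P.natDegree + τ * P.natDegree)) * ‖z - z'‖ := by
        gcongr
        exact two_mul_mul_sq_pow_le_two_rpow hd (by linarith)
end

section
/- (Fixed points of superoperators, Aaronson–Watrous.) Let ℰ(ρ) = Σ_{j∈J} E_j ρ E_j† be a superoperator on S×S complex matrices, given by a finite family of Kraus matrices E_j ∈ ℂ^{S×S} satisfying Σ_{j∈J} E_j† E_j = I. Then there exists a superoperator ℰ_fix, given by a finite family of Kraus matrices F_j ∈ ℂ^{S×S} with Σ_j F_j† F_j = I (so ℰ_fix(ρ) = Σ_j F_j ρ F_j†), such that: (i) for every density matrix ρ, ℰ_fix(ρ) is a fixed point of ℰ, i.e., ℰ(ℰ_fix(ρ)) = ℰ_fix(ρ); and (ii) every density matrix ρ that is a fixed point of ℰ (i.e., ℰ(ρ) = ρ) is also a fixed point of ℰ_fix (i.e., ℰ_fix(ρ) = ρ). -/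
open Matrix
open scoped ComplexOrder

/-- A density matrix: positive semidefinite (hence Hermitian) with trace 1. -/
def IsDensityMatrix {S : ℕ} (ρ : Matrix (Fin S) (Fin S) ℂ) : Prop :=
  ρ.PosSemidef ∧ ρ.trace = 1

/-!
Superoperators correspond to their Choi matrices, which form a compact convex set. The Choi
matrices of those superoperators that fix every fixed point of `ℰ` form a compact convex subset,
which contains the identity and is invariant under composition with `ℰ` on the left. This
composition is affine, so by the Markov–Kakutani theorem it has a fixed point `ℰ_fix` there, a
limit of Cesàro averages: `ℰ ∘ ℰ_fix = ℰ_fix`, and `ℰ_fix` fixes every fixed point of `ℰ`.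
-/

open scoped Kronecker Matrix.Norms.Frobenius

section FixedPoint

open Filter Topology Function

variable {E : Type*}

theorem affineMap_birkhoffAverage {R : Type*} [Field R] [AddCommGroup E] [Module R E]
    (f : E →ᵃ[R] E) {n : ℕ} (hn : (n : R) ≠ 0) (x : E) :
    f (birkhoffAverage R f id n x) = birkhoffAverage R f id n (f x) := by
  have hf : ⇑f = f.linear + const E (f 0) := f.decomp
  have hconst : birkhoffAverage R f (const E (f 0)) n x = f 0 :=
    congrFun (birkhoffAverage_of_comp_eq R const_comp hn) x
  calc f (birkhoffAverage R f id n x)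
      = birkhoffAverage R f f.linear n x + birkhoffAverage R f (const E (f 0)) n x := by
        rw [congrFun hf, Pi.add_apply, map_birkhoffAverage R R, comp_id, hconst, const_apply]
    _ = birkhoffAverage R f f n x := by
        rw [← Pi.add_apply, ← Pi.add_apply, ← birkhoffAverage_add, ← hf]
    _ = birkhoffAverage R f id n (f x) := by
        simp only [birkhoffAverage, birkhoffSum, id, ← iterate_succ_apply, iterate_succ_apply']

theorem birkhoffAverage_mem_of_convex {R : Type*} [Field R] [LinearOrder R]
    [IsStrictOrderedRing R] [AddCommGroup E] [Module R E] {K : Set E} (hK : Convex R K)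
    {f : E → E} (hfK : Set.MapsTo f K K) {x : E} (hx : x ∈ K) {n : ℕ} (hn : n ≠ 0) :
    birkhoffAverage R f id n x ∈ K := by
  rw [birkhoffAverage, birkhoffSum, Finset.smul_sum]
  refine hK.sum_mem (fun _ _ ↦ by positivity) ?_ fun k _ ↦ hfK.iterate k hx
  simp [hn]

theorem exists_isFixedPt_affineMap_of_isCompact_of_convex [NormedAddCommGroup E]
    [NormedSpace ℝ E] (f : E →ᵃ[ℝ] E) {K : Set E} (hK : IsCompact K) (hKconv : Convex ℝ K)
    (hKne : K.Nonempty) (hf : ContinuousOn f K) (hfK : Set.MapsTo f K K) :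
    ∃ x ∈ K, IsFixedPt f x := by
  obtain ⟨x₀, hx₀⟩ := hKne
  let avg : ℕ → E := fun n ↦ birkhoffAverage ℝ f id (n + 1) x₀
  have havg : ∀ n, avg n ∈ K := fun n ↦ birkhoffAverage_mem_of_convex hKconv hfK hx₀ n.succ_ne_zero
  have hdiff : Tendsto (fun n ↦ f (avg n) - avg n) atTop (𝓝 0) := by
    have horbit : Bornology.IsBounded (Set.range (id <| f^[·] x₀)) :=
      hK.isBounded.subset (Set.range_subset_iff.2 fun k ↦ hfK.iterate k hx₀)
    refine ((tendsto_birkhoffAverage_apply_sub_birkhoffAverage ℝ horbit).comp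
      (tendsto_add_atTop_nat 1)).congr fun n ↦ ?_
    rw [Function.comp_apply, affineMap_birkhoffAverage f (Nat.cast_ne_zero.2 n.succ_ne_zero)]
  obtain ⟨x, hx, φ, hφ, hlim⟩ := hK.tendsto_subseq havg
  have hflim : Tendsto (f ∘ avg ∘ φ) atTop (𝓝 (f x)) :=
    (hf x hx).tendsto.comp (tendsto_nhdsWithin_iff.2 ⟨hlim, .of_forall fun n ↦ havg (φ n)⟩)
  exact ⟨x, hx, sub_eq_zero.1
    (tendsto_nhds_unique (hflim.sub hlim) (hdiff.comp hφ.tendsto_atTop))⟩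

end FixedPoint

variable {𝕜 ι l m n : Type*} [RCLike 𝕜]

section PosSemidef

theorem convex_setOf_posSemidef : Convex ℝ {A : Matrix n n 𝕜 | A.PosSemidef} :=
  fun _ hA _ hB _ _ ha hb _ ↦ (hA.smul ha).add (hB.smul hb)

theorem isClosed_setOf_posSemidef [Finite n] : IsClosed {A : Matrix n n 𝕜 | A.PosSemidef} := by
  have := Fintype.ofFinite n
  simp only [posSemidef_iff_dotProduct_mulVec, Set.ofPred_and, Set.ofPred_forall]
  exact (isClosed_eq (by fun_prop) continuous_id).inter
    (isClosed_iInter fun x ↦ isClosed_le (by fun_prop) (by fun_prop))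

variable [Fintype n]

theorem trace_conjTranspose_mul_self_eq_frobenius_norm_sq [Fintype m] (B : Matrix m n 𝕜) :
    (Bᴴ * B).trace = ((‖B‖ ^ 2 : ℝ) : 𝕜) := by
  have hnorm : ‖B‖ ^ 2 = ∑ i, ∑ j, ‖B i j‖ ^ 2 := by
    rw [frobenius_norm_def, ← Real.sqrt_eq_rpow, Real.sq_sqrt (by positivity)]
    simp only [Real.rpow_two]
  rw [hnorm, Finset.sum_comm]
  simp [trace, mul_apply, RCLike.conj_mul]

theorem frobenius_norm_le_norm_trace_of_posSemidef {A : Matrix n n 𝕜} (hA : A.PosSemidef) :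
    ‖A‖ ≤ ‖A.trace‖ := by
  classical
  open scoped MatrixOrder in
  obtain ⟨B, rfl⟩ := CStarAlgebra.nonneg_iff_eq_star_mul_self.1 hA.nonneg
  calc ‖Bᴴ * B‖ ≤ ‖Bᴴ‖ * ‖B‖ := frobenius_norm_mul _ _
    _ = ‖(Bᴴ * B).trace‖ := by
      rw [frobenius_norm_conjTranspose, trace_conjTranspose_mul_self_eq_frobenius_norm_sq,
        RCLike.norm_of_nonneg (by positivity), sq]

end PosSemidef

section Kraus

variable [Fintype ι] [Fintype m]

/-- The completely positive map `ρ ↦ ∑ i, F i * ρ * (F i)ᴴ` with Kraus matrices `F i`. It is a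
superoperator when `∑ i, (F i)ᴴ * F i = 1`. -/
def krausMap (F : ι → Matrix n m 𝕜) : Matrix m m 𝕜 →ₗ[𝕜] Matrix n n 𝕜 where
  toFun ρ := ∑ i, F i * ρ * (F i)ᴴ
  map_add' ρ σ := by simp only [Matrix.mul_add, Matrix.add_mul, Finset.sum_add_distrib]
  map_smul' c ρ := by
    simp only [Matrix.mul_smul, Matrix.smul_mul, Finset.smul_sum, RingHom.id_apply]

theorem krausMap_apply (F : ι → Matrix n m 𝕜) (ρ : Matrix m m 𝕜) :
    krausMap F ρ = ∑ i, F i * ρ * (F i)ᴴ :=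
  rfl

theorem posSemidef_krausMap [Finite n] (F : ι → Matrix n m 𝕜) {ρ : Matrix m m 𝕜}
    (hρ : ρ.PosSemidef) : (krausMap F ρ).PosSemidef :=
  posSemidef_sum _ fun i _ ↦ hρ.mul_mul_conjTranspose_same (F i)

variable [Fintype n]

theorem trace_krausMap (F : ι → Matrix n m 𝕜) (ρ : Matrix m m 𝕜) :
    (krausMap F ρ).trace = ((∑ i, (F i)ᴴ * F i) * ρ).trace := by
  simp only [krausMap_apply, trace_sum, Finset.sum_mul]
  exact Finset.sum_congr rfl fun i _ ↦ by rw [trace_mul_comm, Matrix.mul_assoc]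

theorem forall_trace_krausMap_eq_iff [DecidableEq m] {F : ι → Matrix n m 𝕜} :
    (∀ ρ, (krausMap F ρ).trace = ρ.trace) ↔ ∑ i, (F i)ᴴ * F i = 1 := by
  simp only [trace_krausMap]
  rw [ext_iff_trace_mul_right]
  simp only [one_mul]

end Kraus

section Choi

variable [Fintype m]

/-- The linear map `ρ ↦ ∑ c d, ρ c d • C c d` whose Choi matrix is `C`, where `C` is read as an
`m × m` matrix of `n × n` blocks `C c d`. -/
def choiMap : Matrix (m × n) (m × n) 𝕜 →ₗ[𝕜] Matrix m m 𝕜 →ₗ[𝕜] Matrix n n 𝕜 :=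
  LinearMap.mk₂ 𝕜 (fun C ρ ↦ ∑ c, ∑ d, ρ c d • C.submatrix (c, ·) (d, ·))
    (fun C D ρ ↦ by simp only [submatrix_add, Pi.add_apply, smul_add, Finset.sum_add_distrib])
    (fun a C ρ ↦ by simp only [submatrix_smul, Pi.smul_apply, Finset.smul_sum, smul_comm a])
    (fun C ρ σ ↦ by simp only [Matrix.add_apply, add_smul, Finset.sum_add_distrib])
    (fun a C ρ ↦ by simp only [Matrix.smul_apply, smul_assoc, Finset.smul_sum])

theorem choiMap_apply (C : Matrix (m × n) (m × n) 𝕜) (ρ : Matrix m m 𝕜) :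
    choiMap C ρ = ∑ c, ∑ d, ρ c d • C.submatrix (c, ·) (d, ·) :=
  rfl

theorem choiMap_single_one [DecidableEq m] (C : Matrix (m × n) (m × n) 𝕜) (c d : m) :
    choiMap C (single c d 1) = C.submatrix (c, ·) (d, ·) := by
  simp [choiMap_apply, single_apply, ite_and]

theorem choiMap_sum_vecMulVec_vec [Fintype ι] (F : ι → Matrix n m 𝕜) :
    choiMap (∑ i, vecMulVec (vec (F i)) (star (vec (F i)))) = krausMap F := by
  refine LinearMap.ext fun ρ ↦ ?_
  rw [map_sum, LinearMap.sum_apply, krausMap_apply]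
  refine Finset.sum_congr rfl fun i _ ↦ ?_
  ext a b
  simp only [choiMap_apply, Matrix.sum_apply, Matrix.smul_apply, submatrix_apply, vecMulVec_apply,
    mul_apply, conjTranspose_apply, Pi.star_apply, vec, smul_eq_mul, Finset.sum_mul]
  rw [Finset.sum_comm]
  exact Finset.sum_congr rfl fun _ _ ↦ Finset.sum_congr rfl fun _ _ ↦ by ring

theorem exists_krausMap_eq_choiMap [Finite n] {C : Matrix (m × n) (m × n) 𝕜}
    (hC : C.PosSemidef) : ∃ (r : ℕ) (F : Fin r → Matrix n m 𝕜), krausMap F = choiMap C := by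
  obtain ⟨r, v, rfl⟩ := posSemidef_iff_eq_sum_vecMulVec.1 hC
  exact ⟨r, fun i ↦ of fun a c ↦ v i (c, a), (choiMap_sum_vecMulVec_vec _).symm⟩

theorem trace_eq_sum_trace_choiMap [Fintype n] [DecidableEq m] (C : Matrix (m × n) (m × n) 𝕜) :
    C.trace = ∑ c, (choiMap C (single c c 1)).trace := by
  simp only [choiMap_single_one, trace, diag_apply, submatrix_apply, Fintype.sum_prod_type]

theorem krausMap_one_kronecker_submatrix [Fintype n] [DecidableEq m] [Fintype ι]
    (E : ι → Matrix l n 𝕜) (C : Matrix (m × n) (m × n) 𝕜) (c d : m) :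
    (krausMap (fun j ↦ (1 : Matrix m m 𝕜) ⊗ₖ E j) C).submatrix (c, ·) (d, ·) =
      krausMap E (C.submatrix (c, ·) (d, ·)) := by
  ext a b
  simp [krausMap_apply, Matrix.sum_apply, mul_apply, Fintype.sum_prod_type, one_apply, ite_mul,
    apply_ite]

theorem choiMap_krausMap_one_kronecker [Fintype n] [DecidableEq m] [Fintype ι]
    (E : ι → Matrix l n 𝕜) (C : Matrix (m × n) (m × n) 𝕜) :
    choiMap (krausMap (fun j ↦ (1 : Matrix m m 𝕜) ⊗ₖ E j) C) = krausMap E ∘ₗ choiMap C := by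
  refine LinearMap.ext fun ρ ↦ ?_
  simp only [choiMap_apply, krausMap_one_kronecker_submatrix, LinearMap.comp_apply, map_sum,
    map_smul]

theorem convex_setOf_choiMap_mem {s : Set (Matrix n n 𝕜)} (hs : Convex ℝ s) (ρ : Matrix m m 𝕜) :
    Convex ℝ {C | choiMap C ρ ∈ s} :=
  hs.linear_preimage ((choiMap.flip ρ).restrictScalars ℝ)

theorem isClosed_setOf_choiMap_mem [Finite n] {s : Set (Matrix n n 𝕜)} (hs : IsClosed s)
    (ρ : Matrix m m 𝕜) : IsClosed {C | choiMap C ρ ∈ s} :=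
  hs.preimage (choiMap.flip ρ).continuous_of_finiteDimensional

end Choi

section Superoperators

variable [Fintype m] [Fintype n]

variable (𝕜 m n) in
/-- The Choi matrices of superoperators: a superoperator is a completely positive trace-preserving
map, and complete positivity of a map means that its Choi matrix is positive semidefinite. -/
def superoperatorChoi : Set (Matrix (m × n) (m × n) 𝕜) :=
  {C | C.PosSemidef ∧ ∀ ρ, (choiMap C ρ).trace = ρ.trace}

theorem superoperatorChoi_eq_inter : superoperatorChoi 𝕜 m n =
    {C | C.PosSemidef} ∩ ⋂ ρ, {C | choiMap C ρ ∈ {σ | σ.trace = ρ.trace}} := by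
  ext C
  simp [superoperatorChoi]

theorem convex_superoperatorChoi : Convex ℝ (superoperatorChoi 𝕜 m n) := by
  rw [superoperatorChoi_eq_inter]
  exact convex_setOf_posSemidef.inter (convex_iInter fun ρ ↦ convex_setOf_choiMap_mem
    ((convex_singleton ρ.trace).linear_preimage ((traceLinearMap n 𝕜 𝕜).restrictScalars ℝ)) ρ)

theorem isClosed_superoperatorChoi : IsClosed (superoperatorChoi 𝕜 m n) := by
  rw [superoperatorChoi_eq_inter]
  exact isClosed_setOf_posSemidef.inter (isClosed_iInter fun ρ ↦ isClosed_setOf_choiMap_mem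
    (isClosed_eq (by fun_prop) continuous_const) ρ)

theorem trace_eq_card_of_mem_superoperatorChoi {C : Matrix (m × n) (m × n) 𝕜}
    (hC : C ∈ superoperatorChoi 𝕜 m n) : C.trace = Fintype.card m := by
  classical
  simp [trace_eq_sum_trace_choiMap, hC.2]

theorem isCompact_superoperatorChoi : IsCompact (superoperatorChoi 𝕜 m n) := by
  have : ProperSpace (Matrix (m × n) (m × n) 𝕜) := FiniteDimensional.proper 𝕜 _
  refine Metric.isCompact_of_isClosed_isBounded isClosed_superoperatorChoi
    (isBounded_iff_forall_norm_le.2 ⟨Fintype.card m, fun C hC ↦ ?_⟩)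
  calc ‖C‖ ≤ ‖C.trace‖ := frobenius_norm_le_norm_trace_of_posSemidef hC.1
    _ = Fintype.card m := by
      rw [trace_eq_card_of_mem_superoperatorChoi hC, RCLike.norm_natCast]

theorem exists_krausMap_eq_choiMap_of_mem_superoperatorChoi [DecidableEq m]
    {C : Matrix (m × n) (m × n) 𝕜} (hC : C ∈ superoperatorChoi 𝕜 m n) :
    ∃ (r : ℕ) (F : Fin r → Matrix n m 𝕜), ∑ i, (F i)ᴴ * F i = 1 ∧ krausMap F = choiMap C := by
  obtain ⟨r, F, hF⟩ := exists_krausMap_eq_choiMap hC.1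
  exact ⟨r, F, forall_trace_krausMap_eq_iff.1 fun ρ ↦ hF ▸ hC.2 ρ, hF⟩

theorem krausMap_one_kronecker_mem_superoperatorChoi [Fintype l] [DecidableEq m] [DecidableEq n]
    [Fintype ι] {E : ι → Matrix l n 𝕜} (hE : ∑ j, (E j)ᴴ * E j = 1)
    {C : Matrix (m × n) (m × n) 𝕜} (hC : C ∈ superoperatorChoi 𝕜 m n) :
    krausMap (fun j ↦ (1 : Matrix m m 𝕜) ⊗ₖ E j) C ∈ superoperatorChoi 𝕜 m l := by
  refine ⟨posSemidef_krausMap _ hC.1, fun ρ ↦ ?_⟩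
  rw [choiMap_krausMap_one_kronecker, LinearMap.comp_apply, forall_trace_krausMap_eq_iff.2 hE,
    hC.2]

/-- The Choi matrices of the superoperators that fix every element of `s`. -/
def superoperatorChoiFixing (s : Set (Matrix n n 𝕜)) : Set (Matrix (n × n) (n × n) 𝕜) :=
  {C ∈ superoperatorChoi 𝕜 n n | ∀ ρ ∈ s, choiMap C ρ = ρ}

variable (s : Set (Matrix n n 𝕜))

theorem superoperatorChoiFixing_eq_inter : superoperatorChoiFixing s =
    superoperatorChoi 𝕜 n n ∩ ⋂ ρ ∈ s, {C | choiMap C ρ ∈ ({ρ} : Set (Matrix n n 𝕜))} := by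
  ext C
  simp [superoperatorChoiFixing]

theorem convex_superoperatorChoiFixing : Convex ℝ (superoperatorChoiFixing s) := by
  rw [superoperatorChoiFixing_eq_inter]
  exact convex_superoperatorChoi.inter
    (convex_iInter₂ fun ρ _ ↦ convex_setOf_choiMap_mem (convex_singleton ρ) ρ)

theorem isCompact_superoperatorChoiFixing : IsCompact (superoperatorChoiFixing s) := by
  rw [superoperatorChoiFixing_eq_inter]
  exact isCompact_superoperatorChoi.inter_right
    (isClosed_biInter fun ρ _ ↦ isClosed_setOf_choiMap_mem isClosed_singleton ρ)

theorem nonempty_superoperatorChoiFixing : (superoperatorChoiFixing s).Nonempty := by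
  classical
  let C : Matrix (n × n) (n × n) 𝕜 := vecMulVec (vec 1) (star (vec 1))
  have hC : ∀ ρ, choiMap C ρ = ρ := fun ρ ↦ by
    simpa [krausMap_apply] using
      DFunLike.congr_fun (choiMap_sum_vecMulVec_vec fun _ : Unit ↦ (1 : Matrix n n 𝕜)) ρ
  exact ⟨C, ⟨posSemidef_vecMulVec_self_star _, fun ρ ↦ by rw [hC]⟩, fun ρ _ ↦ hC ρ⟩

theorem mapsTo_krausMap_superoperatorChoiFixing [DecidableEq n] [Fintype ι]
    {E : ι → Matrix n n 𝕜} (hE : ∑ j, (E j)ᴴ * E j = 1) (hs : ∀ ρ ∈ s, krausMap E ρ = ρ) :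
    Set.MapsTo (krausMap fun j ↦ (1 : Matrix n n 𝕜) ⊗ₖ E j)
      (superoperatorChoiFixing s) (superoperatorChoiFixing s) := by
  refine fun C hC ↦ ⟨krausMap_one_kronecker_mem_superoperatorChoi hE hC.1, fun ρ hρ ↦ ?_⟩
  rw [choiMap_krausMap_one_kronecker, LinearMap.comp_apply, hC.2 ρ hρ, hs ρ hρ]

end Superoperators

theorem superoperator_fixed_points_general [Fintype ι] [Fintype n] [DecidableEq n]
    (E : ι → Matrix n n 𝕜) (hE : ∑ j, (E j)ᴴ * E j = 1) :
    ∃ (r : ℕ) (F : Fin r → Matrix n n 𝕜), ∑ i, (F i)ᴴ * F i = 1 ∧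
      (∀ ρ, krausMap E (krausMap F ρ) = krausMap F ρ) ∧
      ∀ ρ, krausMap E ρ = ρ → krausMap F ρ = ρ := by
  let s : Set (Matrix n n 𝕜) := {ρ | krausMap E ρ = ρ}
  let postcomp : Matrix (n × n) (n × n) 𝕜 →ₗ[ℝ] Matrix (n × n) (n × n) 𝕜 :=
    (krausMap fun j ↦ (1 : Matrix n n 𝕜) ⊗ₖ E j).restrictScalars ℝ
  obtain ⟨C, hC, hCfix⟩ := exists_isFixedPt_affineMap_of_isCompact_of_convex postcomp.toAffineMap
    (isCompact_superoperatorChoiFixing s) (convex_superoperatorChoiFixing s)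
    (nonempty_superoperatorChoiFixing s)
    postcomp.continuous_of_finiteDimensional.continuousOn
    (mapsTo_krausMap_superoperatorChoiFixing s hE fun _ hρ ↦ hρ)
  have hcomp : krausMap E ∘ₗ choiMap C = choiMap C := by
    rw [← choiMap_krausMap_one_kronecker]
    exact congrArg choiMap hCfix
  obtain ⟨r, F, hF, hFC⟩ := exists_krausMap_eq_choiMap_of_mem_superoperatorChoi hC.1
  rw [← hFC] at hcomp
  exact ⟨r, F, hF, fun ρ ↦ DFunLike.congr_fun hcomp ρ, fun ρ hρ ↦ hFC ▸ hC.2 ρ hρ⟩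

/-- Aaronson–Watrous fixed-point theorem for superoperators: given a
superoperator `ℰ(ρ) = Σ_j E_j ρ E_j†` with `Σ_j E_j† E_j = I`, there is a
superoperator `ℰ_fix(ρ) = Σ_j F_j ρ F_j†` (with `Σ_j F_j† F_j = I`) such that
(i) `ℰ_fix(ρ)` is a fixed point of `ℰ` for every density matrix `ρ`, and
(ii) every density matrix fixed by `ℰ` is fixed by `ℰ_fix`. -/
theorem superoperator_fixed_points {S r : ℕ}
    (E : Fin r → Matrix (Fin S) (Fin S) ℂ)
    (hE : ∑ j, (E j)ᴴ * E j = 1) :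
    ∃ (r' : ℕ) (F : Fin r' → Matrix (Fin S) (Fin S) ℂ),
      (∑ j, (F j)ᴴ * F j = 1) ∧
      (∀ ρ : Matrix (Fin S) (Fin S) ℂ, IsDensityMatrix ρ →
        (∑ j, E j * (∑ i, F i * ρ * (F i)ᴴ) * (E j)ᴴ) = ∑ i, F i * ρ * (F i)ᴴ) ∧
      (∀ ρ : Matrix (Fin S) (Fin S) ℂ, IsDensityMatrix ρ →
        (∑ j, E j * ρ * (E j)ᴴ) = ρ → (∑ i, F i * ρ * (F i)ᴴ) = ρ) := by
  obtain ⟨r', F, hF, hEF, hfix⟩ := superoperator_fixed_points_general E hE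
  exact ⟨r', F, hF, fun ρ _ ↦ hEF ρ, fun ρ _ ↦ hfix ρ⟩
end

section
/- (Rationality of the limiting functional, matrix form of Lemma 4.1.) Let B₀ and B₁ be m×m complex matrices such that for every p ∈ [0,1], all eigenvalues of B_p := p·B₁ + (1−p)·B₀ have absolute value at most 1 (so that I − (1−z)B_p is invertible for z ∈ (0,1)). Fix vectors x, y ∈ ℂ^m and suppose that |x† (z·(I − (1−z)B_p)^{−1}) y| ≤ 1 for all real z ∈ (0,1) and p ∈ (0,1). Then there exist polynomials Q and R with complex coefficients, each of degree at most m, with R not identically zero, such that for every p ∈ (0,1) with R(p) ≠ 0, the limit lim_{z→0⁺} x† (z·(I − (1−z)B_p)^{−1}) y exists and equals Q(p)/R(p). -/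
open Matrix Filter Polynomial

/-!
By the matrix determinant lemma, `xᵀ (z (1 - (1 - z) B_p)⁻¹) y` is a quotient `N(p, z) / D(p, z)` of
determinants of matrices that are affine in `p`, so `N` and `D` have degree at most `m` in `p`. Let
`R(p)` be the lowest nonzero coefficient of `D` with respect to `z`, say that of `z ^ k`, and let
`Q(p)` be the coefficient of `z ^ k` in `N`. If `R(p) ≠ 0`, then `D(p, z)` is of exact order
`z ^ k`; in particular the matrix is invertible for all small `z ≠ 0`. Boundedness of the quotient
then forces `z ^ k` to divide `N(p, z)`, and cancelling it gives the limit `Q(p) / R(p)`.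
-/

open Asymptotics Topology

section Bivariate

theorem coeff_coeff_swap {R : Type*} [CommSemiring R] (f : R[X][X]) (i j : ℕ) :
    ((Bivariate.swap f).coeff i).coeff j = (f.coeff j).coeff i := by
  induction f using Polynomial.induction_on' with
  | add f g hf hg => simp only [map_add, coeff_add, hf, hg]
  | monomial k a =>
    induction a using Polynomial.induction_on' with
    | add a b ha hb => simp only [map_add, coeff_add, ha, hb]
    | monomial l r =>
      simp only [Bivariate.swap_monomial_monomial, coeff_monomial]
      split_ifs <;> simp [coeff_monomial, *]

theorem natDegree_coeff_swap_le {R : Type*} [CommSemiring R] (f : R[X][X]) (i : ℕ) :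
    ((Bivariate.swap f).coeff i).natDegree ≤ f.natDegree :=
  natDegree_le_iff_coeff_eq_zero.2 fun j hj ↦ by
    rw [coeff_coeff_swap, coeff_eq_zero_of_natDegree_lt hj, coeff_zero]

variable {R n : Type*} [CommRing R] [Fintype n] [DecidableEq n]

/-- The determinant of the matrix pencil `p • A(z) + B(z)` as a bivariate polynomial. The outer
variable is `z`, so that the coefficients are polynomials in `p`. -/
noncomputable def pencilDet (A B : Matrix n n R[X]) : R[X][X] :=
  Bivariate.swap (det ((X : R[X][X]) • A.map C + B.map C))

theorem natDegree_coeff_pencilDet_le (A B : Matrix n n R[X]) (k : ℕ) :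
    ((pencilDet A B).coeff k).natDegree ≤ Fintype.card n :=
  (natDegree_coeff_swap_le _ k).trans (natDegree_det_X_add_C_le A B)

theorem evalEval_pencilDet (A B : Matrix n n R[X]) (p z : R) :
    (pencilDet A B).evalEval p z = det (p • A.map (eval z) + B.map (eval z)) := by
  rw [pencilDet, ← coe_aevalAeval_eq_evalEval, Bivariate.aevalAeval_swap,
    coe_aevalAeval_eq_evalEval, ← coe_evalEvalRingHom, RingHom.map_det]
  congr 1
  ext i j
  simp [mul_comm (eval z (A i j))]

end Bivariate

-- For singular `A` both sides vanish, by the conventions for `A⁻¹` and for division by zero.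
theorem dotProduct_inv_mulVec_eq_div {K n : Type*} [Field K] [Fintype n] [DecidableEq n]
    (A : Matrix n n K) (x y : n → K) :
    x ⬝ᵥ A⁻¹ *ᵥ y = ((A + vecMulVec y x).det - A.det) / A.det := by
  by_cases hA : IsUnit A.det
  · have det_update : (A + vecMulVec y x).det = A.det * (1 + x ⬝ᵥ A⁻¹ *ᵥ y) := by
      rw [vecMulVec_eq Unit, det_add_replicateCol_mul_replicateRow hA, Matrix.mul_assoc,
        ← replicateCol_mulVec, det_unique (n := Unit), Matrix.add_apply, Matrix.one_apply_eq,
        replicateRow_mul_replicateCol_apply]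
    rw [det_update, eq_div_iff hA.ne_zero]
    ring
  · rw [nonsing_inv_apply_not_isUnit A hA, zero_mulVec, dotProduct_zero,
      not_not.1 (mt isUnit_iff_ne_zero.2 hA), div_zero]

theorem dotProduct_pencil_inv_mulVec_eq_div {K n : Type*} [Field K] [Fintype n] [DecidableEq n]
    (A B : Matrix n n K[X]) (x y : n → K[X]) (p z : K) :
    (eval z ∘ x) ⬝ᵥ (p • A.map (eval z) + B.map (eval z))⁻¹ *ᵥ (eval z ∘ y) =
      (pencilDet A (B + vecMulVec y x) - pencilDet A B).evalEval p z /
        (pencilDet A B).evalEval p z := by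
  have eval_update : (B + vecMulVec y x).map (eval z) =
      B.map (eval z) + vecMulVec (eval z ∘ y) (eval z ∘ x) := by
    ext
    simp [vecMulVec_apply]
  rw [evalEval_sub, evalEval_pencilDet, evalEval_pencilDet, eval_update, ← add_assoc,
    dotProduct_inv_mulVec_eq_div]

section Limit

variable {𝕜 : Type*} [NormedField 𝕜] {l : Filter 𝕜}

theorem tendsto_eval_div_pow_of_X_pow_dvd (hl : l ≤ 𝓝[≠] 0) {P : 𝕜[X]} {k : ℕ} (hP : X ^ k ∣ P) :
    Tendsto (fun z ↦ P.eval z / z ^ k) l (𝓝 (P.coeff k)) := by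
  obtain ⟨S, rfl⟩ := hP
  have tendsto_eval : Tendsto S.eval l (𝓝 ((X ^ k * S).coeff k)) := by
    simpa [coeff_X_pow_mul', coeff_zero_eq_eval_zero] using
      S.continuous.continuousAt.tendsto.mono_left (hl.trans nhdsWithin_le_nhds)
  refine tendsto_eval.congr' ?_
  filter_upwards [hl self_mem_nhdsWithin] with z hz
  rw [eval_mul, eval_pow, eval_X, mul_div_cancel_left₀ _ (pow_ne_zero k hz)]

theorem X_pow_dvd_of_eval_isBigO_pow [l.NeBot] (hl : l ≤ 𝓝[≠] 0) {P : 𝕜[X]} {k : ℕ}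
    (hP : P.eval =O[l] (· ^ k)) : X ^ k ∣ P := by
  induction k generalizing P with
  | zero => simp
  | succ k ih =>
    have tendsto_id : Tendsto (fun z : 𝕜 ↦ z) l (𝓝 0) := hl.trans nhdsWithin_le_nhds
    have tendsto_pow : Tendsto (· ^ (k + 1)) l (𝓝 (0 : 𝕜)) := by
      simpa using tendsto_id.pow (k + 1)
    have eval_zero : P.eval 0 = 0 :=
      tendsto_nhds_unique ((P.continuous.tendsto 0).comp tendsto_id) (hP.trans_tendsto tendsto_pow)
    obtain ⟨S, rfl⟩ : X ∣ P := X_dvd_iff.2 (by rwa [coeff_zero_eq_eval_zero])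
    rw [pow_succ']
    refine mul_dvd_mul_left X (ih ?_)
    refine ((isBigO_refl (·⁻¹) l).mul hP).congr' ?_ ?_ <;>
      filter_upwards [hl self_mem_nhdsWithin] with z hz
    · simp [inv_mul_cancel_left₀ hz]
    · simp [pow_succ', inv_mul_cancel_left₀ hz]

theorem tendsto_eval_div_eval_of_isBigO_one (hl : l ≤ 𝓝[≠] 0) {N D : 𝕜[X]} {k : ℕ}
    (hD : X ^ k ∣ D) (hk : D.coeff k ≠ 0)
    (hND : (fun z ↦ N.eval z / D.eval z) =O[l] (fun _ ↦ (1 : 𝕜))) :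
    Tendsto (fun z ↦ N.eval z / D.eval z) l (𝓝 (N.coeff k / D.coeff k)) := by
  obtain rfl | _ := l.eq_or_neBot
  · exact tendsto_bot
  have tendsto_D := tendsto_eval_div_pow_of_X_pow_dvd hl hD
  have D_ne_zero : ∀ᶠ z in l, D.eval z ≠ 0 :=
    (tendsto_D.eventually_ne hk).mono fun z hz h ↦ hz (by rw [h, zero_div])
  have z_pow_ne_zero : ∀ᶠ z in l, z ^ k ≠ 0 := by
    filter_upwards [hl self_mem_nhdsWithin] with z hz using pow_ne_zero k hz
  have N_isBigO : N.eval =O[l] (· ^ k) := by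
    refine ((hND.mul (tendsto_D.isBigO_one 𝕜)).mul (isBigO_refl (· ^ k) l)).congr' ?_ (by simp)
    filter_upwards [D_ne_zero, z_pow_ne_zero] with z hDz hz
    field_simp
  have tendsto_N :=
    tendsto_eval_div_pow_of_X_pow_dvd hl (X_pow_dvd_of_eval_isBigO_pow hl N_isBigO)
  refine (tendsto_N.div tendsto_D hk).congr' ?_
  filter_upwards [z_pow_ne_zero] with z hz using div_div_div_cancel_right₀ hz _ _

theorem tendsto_evalEval_div_evalEval_of_isBigO_one (hl : l ≤ 𝓝[≠] 0) (N : 𝕜[X][X]) {D : 𝕜[X][X]}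
    {p : 𝕜} (hp : D.trailingCoeff.eval p ≠ 0)
    (hND : (fun z ↦ N.evalEval p z / D.evalEval p z) =O[l] (fun _ ↦ (1 : 𝕜))) :
    Tendsto (fun z ↦ N.evalEval p z / D.evalEval p z) l
      (𝓝 ((N.coeff D.natTrailingDegree).eval p / D.trailingCoeff.eval p)) := by
  simp only [← map_evalRingHom_eval] at hND ⊢
  have X_pow_dvd : X ^ D.natTrailingDegree ∣ D.map (evalRingHom p) :=
    X_pow_dvd_iff.2 fun j hj ↦ by
      rw [coeff_map, coeff_eq_zero_of_lt_natTrailingDegree hj, map_zero]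
  simpa only [trailingCoeff, coeff_map, coe_evalRingHom] using
    tendsto_eval_div_eval_of_isBigO_one hl X_pow_dvd
      (by simpa only [trailingCoeff, coeff_map, coe_evalRingHom] using hp) hND

variable {n : Type*} [Fintype n] [DecidableEq n]

theorem exists_rational_tendsto_dotProduct_pencil_inv_mulVec (A B : Matrix n n 𝕜[X])
    (x y : n → 𝕜[X]) (hAB : pencilDet A B ≠ 0) :
    ∃ Q R : 𝕜[X], Q.natDegree ≤ Fintype.card n ∧ R.natDegree ≤ Fintype.card n ∧ R ≠ 0 ∧
      ∀ l ≤ 𝓝[≠] (0 : 𝕜), ∀ p, R.eval p ≠ 0 →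
        ((fun z ↦ (eval z ∘ x) ⬝ᵥ (p • A.map (eval z) + B.map (eval z))⁻¹ *ᵥ (eval z ∘ y))
          =O[l] fun _ ↦ (1 : 𝕜)) →
        Tendsto (fun z ↦ (eval z ∘ x) ⬝ᵥ (p • A.map (eval z) + B.map (eval z))⁻¹ *ᵥ (eval z ∘ y))
          l (𝓝 (Q.eval p / R.eval p)) := by
  let D := pencilDet A B
  let N := pencilDet A (B + vecMulVec y x) - D
  refine ⟨N.coeff D.natTrailingDegree, D.trailingCoeff, ?_, natDegree_coeff_pencilDet_le ..,
    trailingCoeff_nonzero_iff_nonzero.2 hAB, fun l hl p hp hbdd ↦ ?_⟩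
  · rw [coeff_sub]
    exact (natDegree_sub_le _ _).trans
      (max_le (natDegree_coeff_pencilDet_le ..) (natDegree_coeff_pencilDet_le ..))
  · simp only [dotProduct_pencil_inv_mulVec_eq_div] at hbdd ⊢
    exact tendsto_evalEval_div_evalEval_of_isBigO_one hl N hp hbdd

theorem limiting_functional_rational_general (B₀ B₁ : Matrix n n 𝕜) (x y : n → 𝕜) :
    ∃ Q R : 𝕜[X], Q.natDegree ≤ Fintype.card n ∧ R.natDegree ≤ Fintype.card n ∧ R ≠ 0 ∧
      ∀ l ≤ 𝓝[≠] (0 : 𝕜), ∀ p, R.eval p ≠ 0 →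
        ((fun z ↦ x ⬝ᵥ (z • (1 - (1 - z) • (p • B₁ + (1 - p) • B₀))⁻¹) *ᵥ y)
          =O[l] fun _ ↦ (1 : 𝕜)) →
        Tendsto (fun z ↦ x ⬝ᵥ (z • (1 - (1 - z) • (p • B₁ + (1 - p) • B₀))⁻¹) *ᵥ y)
          l (𝓝 (Q.eval p / R.eval p)) := by
  let A : Matrix n n 𝕜[X] := (1 - X : 𝕜[X]) • (B₀ - B₁).map C
  let B : Matrix n n 𝕜[X] := 1 - (1 - X : 𝕜[X]) • B₀.map C
  have eval_A (z : 𝕜) : A.map (eval z) = (1 - z) • (B₀ - B₁) := by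
    ext; simp [A]
  have eval_B (z : 𝕜) : B.map (eval z) = 1 - (1 - z) • B₀ := by
    ext; simp [B, one_apply, apply_ite]
  have eval_pencil (p z : 𝕜) : p • A.map (eval z) + B.map (eval z) =
      1 - (1 - z) • (p • B₁ + (1 - p) • B₀) := by
    rw [eval_A, eval_B]
    module
  have pencilDet_ne_zero : pencilDet A B ≠ 0 := fun h ↦ by
    have det_at_one := evalEval_pencilDet A B 0 1
    rw [h, eval_pencil] at det_at_one
    simp at det_at_one
  have eval_x (z : 𝕜) : eval z ∘ C ∘ x = x := by ext; simp
  have eval_y (z : 𝕜) : eval z ∘ ((X : 𝕜[X]) • C ∘ y) = z • y := by ext; simp [mul_comm z]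
  simpa only [eval_pencil, eval_x, eval_y, mulVec_smul, ← smul_mulVec] using
    exists_rational_tendsto_dotProduct_pencil_inv_mulVec A B (C ∘ x) ((X : 𝕜[X]) • C ∘ y)
      pencilDet_ne_zero

end Limit

theorem map_ofReal_nhdsGT_zero_le : map Complex.ofReal (𝓝[>] 0) ≤ 𝓝[≠] 0 :=
  (Complex.continuous_ofReal.tendsto' 0 0 Complex.ofReal_zero).inf
    (tendsto_principal_principal.2 fun _ hz ↦ Complex.ofReal_ne_zero.2 (ne_of_gt hz))

/-- Rationality of the limiting functional (matrix form of Lemma 4.1): if all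
eigenvalues of `B_p = p B₁ + (1-p) B₀` have absolute value at most `1` for
`p ∈ [0,1]`, and `|x† (z (I - (1-z)B_p)⁻¹) y| ≤ 1` for `z, p ∈ (0,1)`, then
there are polynomials `Q, R` of degree at most `m` with `R ≠ 0` such that for
every `p ∈ (0,1)` with `R(p) ≠ 0`, the limit as `z → 0⁺` of
`x† (z (I - (1-z)B_p)⁻¹) y` exists and equals `Q(p)/R(p)`. -/
theorem limiting_functional_rational {m : ℕ}
    (B₀ B₁ : Matrix (Fin m) (Fin m) ℂ)
    (hB : ∀ p : ℝ, p ∈ Set.Icc (0:ℝ) 1 →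
      ∀ c : ℂ, ((p : ℂ) • B₁ + ((1 - p : ℝ) : ℂ) • B₀).charpoly.IsRoot c →
        ‖c‖ ≤ 1)
    (x y : Fin m → ℂ)
    (hbound : ∀ z : ℝ, z ∈ Set.Ioo (0:ℝ) 1 → ∀ p : ℝ, p ∈ Set.Ioo (0:ℝ) 1 →
      ‖star x ⬝ᵥ (((z : ℂ) • ((1 : Matrix (Fin m) (Fin m) ℂ) -
          ((1 - z : ℝ) : ℂ) • ((p : ℂ) • B₁ + ((1 - p : ℝ) : ℂ) • B₀))⁻¹).mulVec y)‖
        ≤ 1) :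
    ∃ Q R : Polynomial ℂ, Q.natDegree ≤ m ∧ R.natDegree ≤ m ∧ R ≠ 0 ∧
      ∀ p : ℝ, p ∈ Set.Ioo (0:ℝ) 1 → R.eval (p : ℂ) ≠ 0 →
        Tendsto
          (fun z : ℝ => star x ⬝ᵥ (((z : ℂ) • ((1 : Matrix (Fin m) (Fin m) ℂ) -
            ((1 - z : ℝ) : ℂ) • ((p : ℂ) • B₁ + ((1 - p : ℝ) : ℂ) • B₀))⁻¹).mulVec y))
          (nhdsWithin 0 (Set.Ioi 0))
          (nhds (Q.eval (p : ℂ) / R.eval (p : ℂ))) := by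
  obtain ⟨Q, R, hQ, hR, hR0, hlim⟩ := limiting_functional_rational_general B₀ B₁ (star x) y
  rw [Fintype.card_fin] at hQ hR
  push_cast at hbound ⊢
  refine ⟨Q, R, hQ, hR, hR0, fun p hp hRp ↦ hlim _ map_ofReal_nhdsGT_zero_le p hRp (.of_bound 1 ?_)⟩
  rw [eventually_map]
  filter_upwards [Ioo_mem_nhdsGT one_pos] with z hz
  simpa only [norm_one, mul_one] using hbound z hz p hp
end
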